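/- Let d ≥ 2, let u be a heat kernel on S^{d-1}, let ω : (0,∞) → [0,∞) be measurable with ∫₀^∞ ω(t)(1 − e^{−2dt}) dt < ∞, and let b(c) := ∫₀^∞ u(t,c) ω(t) dt. Then for every smooth F : S^{d-1} → ℝ with F(−σ) = F(σ): ∬_{S^{d-1}×S^{d-1}} (F(σ') − F(σ))² b(σ'·σ) dσ' dσ ≤ C_P ∫_{S^{d-1}} |∇_σ F|² dσ, where C_P = ∫₀^∞ ω(t)(1 − e^{−2dt})/d dt. -/

import Mathlib

open MeasureTheory
open scoped RealInnerProductSpace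

noncomputable section

/-- Euclidean space `ℝ^d`. -/
abbrev E (d : ℕ) : Type := EuclideanSpace ℝ (Fin d)

/-- The unit sphere `S^{d-1}` of `ℝ^d`. -/
abbrev Sph (d : ℕ) : Type := Metric.sphere (0 : E d) 1

/-- The surface measure on the unit sphere, realized as a Hausdorff measure. -/
def sphMeasure (d : ℕ) : Measure (Sph d) := μH[(d : ℝ) - 1]

open Classical in
/-- The 0-homogeneous extension of a function defined on the unit sphere. -/
def homogExt {d : ℕ} (F : Sph d → ℝ) (x : E d) : ℝ :=
  if hx : x = 0 then 0
  else F ⟨‖x‖⁻¹ • x, by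
    rw [mem_sphere_zero_iff_norm, norm_smul, norm_inv, norm_norm,
      inv_mul_cancel₀ (norm_ne_zero_iff.mpr hx)]⟩

/-- Smoothness of a function on the sphere, via its 0-homogeneous extension. -/
def SphSmooth {d : ℕ} (F : Sph d → ℝ) : Prop :=
  ContDiffOn ℝ (⊤ : ℕ∞) (homogExt F) {x : E d | x ≠ 0}

/-- Spherical gradient: the Euclidean gradient of the 0-homogeneous extension. -/
def sphGrad {d : ℕ} (F : Sph d → ℝ) (σ : Sph d) : E d :=
  gradient (homogExt F) (σ : E d)

/-- Euclidean Laplacian of a function on `ℝ^d`. -/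
def lapl {d : ℕ} (f : E d → ℝ) (x : E d) : ℝ :=
  ∑ i : Fin d,
    fderiv ℝ (fun y => fderiv ℝ f y (EuclideanSpace.single i 1)) x (EuclideanSpace.single i 1)

/-- Spherical Laplacian: the Euclidean Laplacian of the 0-homogeneous extension. -/
def sphLap {d : ℕ} (F : Sph d → ℝ) (σ : Sph d) : ℝ :=
  lapl (homogExt F) (σ : E d)

/-- The spherical linear Boltzmann operator `𝓑` with kernel `b`. -/
def sphB {d : ℕ} (b : ℝ → ℝ) (F : Sph d → ℝ) (σ : Sph d) : ℝ :=
  ∫ (σ' : Sph d), (F σ' - F σ) * b ⟪(σ' : E d), (σ : E d)⟫ ∂(sphMeasure d)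

/-- The intertwined iterated carré du champ `Γ²_{𝓑,Δ}(g,g)`. -/
def Gamma2BD {d : ℕ} (b : ℝ → ℝ) (g : Sph d → ℝ) (σ : Sph d) : ℝ :=
  (1 / 2) * sphB b (fun τ => ‖sphGrad g τ‖ ^ 2) σ
    - ⟪sphGrad g σ, sphGrad (fun τ => sphB b g τ) σ⟫

/-- The iterated carré du champ `Γ²_{Δ,Δ}(g,g)` of the spherical Laplacian. -/
def Gamma2DD {d : ℕ} (g : Sph d → ℝ) (σ : Sph d) : ℝ :=
  (1 / 2) * sphLap (fun τ => ‖sphGrad g τ‖ ^ 2) σ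
    - ⟪sphGrad g σ, sphGrad (fun τ => sphLap g τ) σ⟫

/-- A collision kernel: non-negative, measurable, satisfying the Lévy condition. -/
def LevyKernel (d : ℕ) (b : ℝ → ℝ) : Prop :=
  Measurable b ∧ (∀ c ∈ Set.Icc (-1 : ℝ) 1, 0 ≤ b c) ∧
    ∀ e : Sph d,
      Integrable
        (fun σ' : Sph d => (1 - ⟪(e : E d), (σ' : E d)⟫ ^ 2) * b ⟪(e : E d), (σ' : E d)⟫)
        (sphMeasure d)

/-- The log-Sobolev inequality `LS(Λ, b)` on the sphere. -/
def LS (d : ℕ) (b : ℝ → ℝ) (Λ : ℝ) : Prop :=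
  ∀ f : Sph d → ℝ, SphSmooth f → (∀ σ, 0 < f σ) → (∀ σ, f (-σ) = f σ) →
    Λ * ∫ (σ : Sph d), (∫ (σ' : Sph d),
          (f σ' - f σ) ^ 2 / (f σ' + f σ) * b ⟪(σ' : E d), (σ : E d)⟫ ∂(sphMeasure d))
        ∂(sphMeasure d)
      ≤ ∫ (σ : Sph d), Gamma2BD b (fun τ => Real.log (f τ)) σ * f σ ∂(sphMeasure d)

/-- Action of a heat kernel `u` on a function on the sphere. -/
def heatU {d : ℕ} (u : ℝ → ℝ → ℝ) (f : Sph d → ℝ) (t : ℝ) (σ : Sph d) : ℝ :=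
  ∫ (σ' : Sph d), f σ' * u t ⟪(σ' : E d), (σ : E d)⟫ ∂(sphMeasure d)

/-- `u` is a heat kernel on the sphere `S^{d-1}`: it is non-negative, measurable, and for every
smooth `f` the function `U(t,σ) = ∫ f(σ') u(t, σ'·σ) dσ'` is jointly smooth on `(0,∞) × S^{d-1}`,
solves the heat equation, and converges uniformly to `f` as `t → 0⁺`. -/
def IsHeatKernel (d : ℕ) (u : ℝ → ℝ → ℝ) : Prop :=
  (∀ t, 0 < t → ∀ c ∈ Set.Icc (-1 : ℝ) 1, 0 ≤ u t c) ∧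
  Measurable (fun p : ℝ × ℝ => u p.1 p.2) ∧
  ∀ f : Sph d → ℝ, SphSmooth f →
    ContDiffOn ℝ (⊤ : ℕ∞) (fun p : ℝ × E d => homogExt (fun σ => heatU u f p.1 σ) p.2)
      (Set.Ioi (0 : ℝ) ×ˢ {x : E d | x ≠ 0}) ∧
    (∀ t, 0 < t → ∀ σ : Sph d,
      HasDerivAt (fun s => heatU u f s σ) (sphLap (fun τ => heatU u f t τ) σ) t) ∧
    TendstoUniformly (fun t (σ : Sph d) => heatU u f t σ) f (nhdsWithin 0 (Set.Ioi 0))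

/-- The subordinate kernel `b(c) = ∫₀^∞ u(t,c) ω(t) dt`. -/
def subordKernel (u : ℝ → ℝ → ℝ) (ω : ℝ → ℝ) (c : ℝ) : ℝ :=
  ∫ t in Set.Ioi (0 : ℝ), u t c * ω t

/-!
Write `U_t` for the heat flow. For `F` even the energy of `F` against `u t` is
`2 (∫ F² - ∫ F U_t F)`, so by Tonelli it suffices to show
`∫ F² - ∫ F U_t F ≤ (1 - e^{-2dt}) / (2d) ∫ |∇F|²` for each `t`.
By the semigroup property, `A t = ∫ F U_t F` satisfies `A' t = -∫ |∇U_{t/2} F|²` and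
`A'' t = ∫ (ΔU_{t/2} F)²`, so the bound follows by integrating `A'' + 2d A' ≥ 0` twice. This
differential inequality is `2d ∫ |∇G|² ≤ ∫ (ΔG)²` for even `G = U_{t/2} F`. It is obtained by
applying the Poincaré inequality of odd functions to derivatives of `G` and summing, and
the odd Poincaré inequality is Wirtinger's inequality for antiperiodic functions, averaged over
all great circles by the orthogonal group.
-/

section Analysis

open Filter Topology

lemma ofReal_integral_le_lintegral_ofReal {α : Type*} [MeasurableSpace α] {μ : Measure α}
    (f : α → ℝ) : ENNReal.ofReal (∫ x, f x ∂μ) ≤ ∫⁻ x, ENNReal.ofReal (f x) ∂μ := by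
  by_cases hf : Integrable f μ
  · rw [integral_eq_lintegral_pos_part_sub_lintegral_neg_part hf]
    exact ENNReal.ofReal_le_of_le_toReal (sub_le_self _ ENNReal.toReal_nonneg)
  · simp [integral_undef hf]

lemma ofReal_integral_integral_integral_le {X Y Z : Type*} [MeasurableSpace X] [MeasurableSpace Y]
    [MeasurableSpace Z] {μ : Measure X} {ν : Measure Y} {ρ : Measure Z} [SFinite μ] [SFinite ν]
    [SFinite ρ] {k : X → Y → Z → ℝ}
    (hk : Measurable fun p : (X × Y) × Z => k p.1.1 p.1.2 p.2) :
    ENNReal.ofReal (∫ x, ∫ y, ∫ z, k x y z ∂ρ ∂ν ∂μ) ≤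
      ∫⁻ z, ∫⁻ x, ∫⁻ y, ENNReal.ofReal (k x y z) ∂ν ∂μ ∂ρ := by
  have hk' := hk.ennreal_ofReal
  calc ENNReal.ofReal (∫ x, ∫ y, ∫ z, k x y z ∂ρ ∂ν ∂μ)
      ≤ ∫⁻ x, ∫⁻ y, ∫⁻ z, ENNReal.ofReal (k x y z) ∂ρ ∂ν ∂μ := by
        refine (ofReal_integral_le_lintegral_ofReal _).trans (lintegral_mono fun x => ?_)
        refine (ofReal_integral_le_lintegral_ofReal _).trans (lintegral_mono fun y => ?_)
        exact ofReal_integral_le_lintegral_ofReal _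
    _ = ∫⁻ x, ∫⁻ z, ∫⁻ y, ENNReal.ofReal (k x y z) ∂ν ∂ρ ∂μ :=
        lintegral_congr fun x => lintegral_lintegral_swap
          (hk'.comp (f := fun p : Y × Z => ((x, p.1), p.2)) (by fun_prop)).aemeasurable
    _ = ∫⁻ z, ∫⁻ x, ∫⁻ y, ENNReal.ofReal (k x y z) ∂ν ∂μ ∂ρ :=
        lintegral_lintegral_swap (Measurable.lintegral_prod_right'
          (f := fun q : (X × Z) × Y => ENNReal.ofReal (k q.1.1 q.2 q.1.2)) (hk'.comp
            (f := fun q : (X × Z) × Y => ((q.1.1, q.2), q.1.2)) (by fun_prop))).aemeasurable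

lemma hasDerivAt_integral_of_continuousOn_prod {X : Type*} [TopologicalSpace X] [CompactSpace X]
    [SecondCountableTopology X] [MeasurableSpace X] [BorelSpace X] {μ : Measure X}
    [IsFiniteMeasure μ] {φ ψ : ℝ → X → ℝ} {I : Set ℝ} (hI : IsOpen I)
    (hφ : ∀ s ∈ I, Continuous (φ s))
    (hderiv : ∀ s ∈ I, ∀ x, HasDerivAt (fun r => φ r x) (ψ s x) s)
    (hψ : ContinuousOn (fun p : ℝ × X => ψ p.1 p.2) (I ×ˢ Set.univ)) {s : ℝ} (hs : s ∈ I) :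
    HasDerivAt (fun r => ∫ x, φ r x ∂μ) (∫ x, ψ s x ∂μ) s := by
  obtain ⟨ε, hε, hball⟩ := Metric.nhds_basis_closedBall.mem_iff.1 (hI.mem_nhds hs)
  obtain ⟨C, hC⟩ := ((isCompact_closedBall s ε).prod
    (isCompact_univ (X := X))).exists_bound_of_continuousOn (hψ.mono (Set.prod_mono_left hball))
  have hψs : Continuous (ψ s) :=
    hψ.comp_continuous (f := fun x => (s, x)) (by fun_prop) fun x => ⟨hs, trivial⟩
  exact (hasDerivAt_integral_of_dominated_loc_of_deriv_le (bound := fun _ => C)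
    (Metric.closedBall_mem_nhds s hε)
    (eventually_of_mem (hI.mem_nhds hs) fun r hr => (hφ r hr).aestronglyMeasurable)
    ((hφ s hs).integrable_of_hasCompactSupport (.of_compactSpace _)) hψs.aestronglyMeasurable
    (.of_forall fun x r hr => hC (r, x) ⟨hr, trivial⟩) (integrable_const C)
    (.of_forall fun x r hr => hderiv r (hball hr) x)).2

lemma le_of_tendsto_of_deriv_nonneg {f f' : ℝ → ℝ} {L : ℝ}
    (hderiv : ∀ t, 0 < t → HasDerivAt f (f' t) t) (hf' : ∀ t, 0 < t → 0 ≤ f' t)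
    (hL : Tendsto f (𝓝[>] 0) (𝓝 L)) {t : ℝ} (ht : 0 < t) : L ≤ f t := by
  have hmono : MonotoneOn f (Set.Ioi 0) := by
    refine monotoneOn_of_hasDerivWithinAt_nonneg (f' := f') (convex_Ioi 0)
      (fun s hs => (hderiv s hs).continuousAt.continuousWithinAt) ?_ ?_ <;>
      simp only [interior_Ioi]
    exacts [fun s hs => (hderiv s hs).hasDerivWithinAt, hf']
  refine le_of_tendsto hL ?_
  filter_upwards [Ioc_mem_nhdsGT ht] with s hs using hmono hs.1 ht hs.2

lemma eq_of_tendsto_of_hasDerivAt_zero {f : ℝ → ℝ} {L T : ℝ}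
    (hderiv : ∀ t ∈ Set.Ioo 0 T, HasDerivAt f 0 t) (hL : Tendsto f (𝓝[>] 0) (𝓝 L)) {t : ℝ}
    (ht : t ∈ Set.Ioo 0 T) : f t = L := by
  have hconst : ∀ r ∈ Set.Ioo 0 T, f r = f t := fun r hr =>
    isOpen_Ioo.is_const_of_deriv_eq_zero isPreconnected_Ioo
      (fun q hq => (hderiv q hq).differentiableAt.differentiableWithinAt)
      (fun q hq => (hderiv q hq).deriv) hr ht
  refine tendsto_nhds_unique (tendsto_const_nhds.congr' ?_) hL
  filter_upwards [Ioo_mem_nhdsGT (ht.1.trans ht.2)] with r hr using (hconst r hr).symm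

lemma hasDerivAt_exp_mul (c t : ℝ) :
    HasDerivAt (fun s => Real.exp (c * s)) (c * Real.exp (c * t)) t := by
  simpa [mul_comm] using ((hasDerivAt_id t).const_mul c).exp

lemma tendsto_exp_mul_nhdsGT_zero (c : ℝ) :
    Tendsto (fun t => Real.exp (c * t)) (𝓝[>] 0) (𝓝 1) := by
  have h : Continuous fun t => Real.exp (c * t) := by fun_prop
  simpa using (h.tendsto 0).mono_left nhdsWithin_le_nhds

/- `exp (c t) * f' t` is nondecreasing. -/
lemma le_exp_mul_deriv_of_tendsto {f' f'' : ℝ → ℝ} {c b : ℝ}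
    (hderiv : ∀ t, 0 < t → HasDerivAt f' (f'' t) t) (hc : ∀ t, 0 < t → 0 ≤ f'' t + c * f' t)
    (hb : Tendsto f' (𝓝[>] 0) (𝓝 b)) {t : ℝ} (ht : 0 < t) : b * Real.exp (-c * t) ≤ f' t := by
  have h : b ≤ Real.exp (c * t) * f' t := by
    refine le_of_tendsto_of_deriv_nonneg (f := fun s => Real.exp (c * s) * f' s)
      (fun s hs => (hasDerivAt_exp_mul c s).mul (hderiv s hs)) (fun s hs => ?_)
      (by simpa using (tendsto_exp_mul_nhdsGT_zero c).mul hb) ht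
    have := mul_nonneg (Real.exp_pos (c * s)).le (hc s hs)
    linarith
  calc b * Real.exp (-c * t) ≤ Real.exp (c * t) * f' t * Real.exp (-c * t) := by gcongr
    _ = f' t * Real.exp (c * t + -c * t) := by rw [Real.exp_add]; ring
    _ = f' t := by simp

lemma add_mul_le_of_tendsto_of_deriv {f f' f'' : ℝ → ℝ} {a b c : ℝ} (hc0 : c ≠ 0)
    (hf : ∀ t, 0 < t → HasDerivAt f (f' t) t) (hf' : ∀ t, 0 < t → HasDerivAt f' (f'' t) t)
    (hc : ∀ t, 0 < t → 0 ≤ f'' t + c * f' t) (ha : Tendsto f (𝓝[>] 0) (𝓝 a))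
    (hb : Tendsto f' (𝓝[>] 0) (𝓝 b)) {t : ℝ} (ht : 0 < t) :
    a + b * ((1 - Real.exp (-c * t)) / c) ≤ f t := by
  have hcomp (s : ℝ) : HasDerivAt (fun r => b * ((1 - Real.exp (-c * r)) / c))
      (b * Real.exp (-c * s)) s := by
    refine (((hasDerivAt_exp_mul (-c) s).const_sub 1).div_const c).const_mul b |>.congr_deriv ?_
    rw [neg_mul, neg_neg, mul_div_cancel_left₀ _ hc0]
  have hlim : Tendsto (fun r => f r - b * ((1 - Real.exp (-c * r)) / c)) (𝓝[>] 0) (𝓝 a) := by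
    simpa using ha.sub ((((tendsto_exp_mul_nhdsGT_zero (-c)).const_sub 1).div_const c).const_mul b)
  exact le_sub_iff_add_le.1 (le_of_tendsto_of_deriv_nonneg
    (fun s hs => (hf s hs).sub (hcomp s))
    (fun s hs => sub_nonneg.2 (le_exp_mul_deriv_of_tendsto hf' hc hb hs)) hlim ht)

end Analysis

section Wirtinger

open intervalIntegral

lemma norm_fourierCoeffOn_le_of_hasDerivAt {a b : ℝ} (hab : a < b) {f f' : ℝ → ℂ}
    (hf : ∀ x ∈ Set.uIcc a b, HasDerivAt f (f' x) x) (hf' : IntervalIntegrable f' volume a b)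
    (hends : f a = f b) {n : ℤ} (hn : n ≠ 0) :
    ‖fourierCoeffOn hab f n‖ ≤ (b - a) / (2 * Real.pi) * ‖fourierCoeffOn hab f' n‖ := by
  have hn1 : (1 : ℝ) ≤ ‖(n : ℂ)‖ := by
    rw [Complex.norm_intCast]
    exact_mod_cast Int.one_le_abs hn
  have hba : ‖(b : ℂ) - a‖ = b - a := by
    rw [← Complex.ofReal_sub, Complex.norm_of_nonneg (sub_pos.2 hab).le]
  rw [fourierCoeffOn_of_hasDerivAt hab hn hf hf', hends, sub_self, mul_zero, zero_sub, norm_mul,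
    norm_neg, norm_mul, norm_div, norm_mul, hba, ← mul_assoc]
  simp only [norm_one, norm_mul, norm_neg, Complex.norm_ofNat, Complex.norm_real, Complex.norm_I,
    mul_one, Real.norm_eq_abs, abs_of_pos Real.pi_pos]
  gcongr
  rw [one_div_mul_eq_div]
  exact div_le_div_of_nonneg_left (sub_pos.2 hab).le Real.two_pi_pos
    (le_mul_of_one_le_right Real.two_pi_pos.le hn1)

/- Compare the two Parseval sums term by term. -/
lemma integral_norm_sq_le_of_hasDerivAt {a b : ℝ} (hab : a < b) {f f' : ℝ → ℂ}
    (hf : ∀ x ∈ Set.uIcc a b, HasDerivAt f (f' x) x) (hf' : ContinuousOn f' (Set.uIcc a b))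
    (hends : f a = f b) (hmean : ∫ x in a..b, f x = 0) :
    ∫ x in a..b, ‖f x‖ ^ 2 ≤ ((b - a) / (2 * Real.pi)) ^ 2 * ∫ x in a..b, ‖f' x‖ ^ 2 := by
  have hmemLp {g : ℝ → ℂ} (hg : ContinuousOn g (Set.uIcc a b)) :
      MemLp g 2 (volume.restrict (Set.Ioc a b)) := by
    obtain ⟨C, hC⟩ := isCompact_uIcc.exists_bound_of_continuousOn hg
    rw [Set.uIcc_of_le hab.le] at hg hC
    exact .of_bound ((hg.mono Set.Ioc_subset_Icc_self).aestronglyMeasurable measurableSet_Ioc) C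
      (ae_restrict_of_forall_mem measurableSet_Ioc fun x hx => hC x (Set.Ioc_subset_Icc_self hx))
  have hzero : fourierCoeffOn hab f 0 = 0 := by simp [fourierCoeffOn_eq_integral, hmean]
  have hcoeff (n : ℤ) : ‖fourierCoeffOn hab f n‖ ^ 2 ≤
      ((b - a) / (2 * Real.pi)) ^ 2 * ‖fourierCoeffOn hab f' n‖ ^ 2 := by
    rw [← mul_pow]
    rcases eq_or_ne n 0 with rfl | hn
    · rw [hzero, norm_zero, zero_pow two_ne_zero]
      positivity
    · gcongr
      exact norm_fourierCoeffOn_le_of_hasDerivAt hab hf hf'.intervalIntegrable hends hn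
  have h := hasSum_le hcoeff
    (hasSum_sq_fourierCoeffOn hab (hmemLp fun x hx => (hf x hx).continuousAt.continuousWithinAt))
    ((hasSum_sq_fourierCoeffOn hab (hmemLp hf')).mul_left _)
  rw [mul_smul_comm, smul_eq_mul, smul_eq_mul] at h
  exact le_of_mul_le_mul_left h (inv_pos.2 (sub_pos.2 hab))

lemma integral_sq_le_of_antiperiodic {h h' : ℝ → ℝ} (hh : ∀ θ, HasDerivAt h (h' θ) θ)
    (hh' : Continuous h') (hanti : Function.Antiperiodic h Real.pi) :
    ∫ θ in (0 : ℝ)..2 * Real.pi, h θ ^ 2 ≤ ∫ θ in (0 : ℝ)..2 * Real.pi, h' θ ^ 2 := by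
  have hcont : Continuous h := continuous_iff_continuousAt.2 fun θ => (hh θ).continuousAt
  have hmean : ∫ θ in (0 : ℝ)..2 * Real.pi, h θ = 0 := by
    have hshift := integral_comp_add_right (a := 0) (b := Real.pi) h Real.pi
    simp only [hanti _, intervalIntegral.integral_neg, zero_add, ← two_mul] at hshift
    rw [← integral_add_adjacent_intervals (hcont.intervalIntegrable 0 Real.pi)
      (hcont.intervalIntegrable _ _), ← hshift, add_neg_cancel]
  have key := integral_norm_sq_le_of_hasDerivAt (f := fun θ => (h θ : ℂ)) Real.two_pi_pos
    (fun θ _ => (hh θ).ofReal_comp) (Complex.continuous_ofReal.comp hh').continuousOn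
    (congrArg _ hanti.periodic_two_mul.eq.symm)
    (by rw [intervalIntegral.integral_ofReal, hmean, Complex.ofReal_zero])
  simpa [Real.pi_ne_zero] using key

end Wirtinger

section Averaging

variable {G X : Type*} [Group G] [TopologicalSpace G] [CompactSpace G]
  [MeasurableSpace G] [BorelSpace G]

lemma measureReal_inv_haar_univ_pos [IsTopologicalGroup G] :
    0 < (Measure.haar : Measure G).inv.real Set.univ := by
  refine ENNReal.toReal_pos ?_ (measure_ne_top _ _)
  rw [Measure.inv_apply, Set.inv_univ]
  exact (isOpen_univ.measure_pos _ Set.univ_nonempty).ne'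

variable [SecondCountableTopology G]

lemma measureReal_univ_mul_integral_eq_integral_smul [ContinuousMul G] [TopologicalSpace X]
    [CompactSpace X] [SecondCountableTopology X] [MeasurableSpace X] [BorelSpace X] [MulAction G X]
    [ContinuousSMul G X] [MulAction.IsPretransitive G X] (ν : Measure G) [IsFiniteMeasure ν]
    [ν.IsMulRightInvariant] (μ : Measure X) [IsFiniteMeasure μ] [SMulInvariantMeasure G X μ]
    {f : X → ℝ} (hf : Continuous f) (e : X) :
    ν.real Set.univ * ∫ x, f x ∂μ = μ.real Set.univ * ∫ g, f (g • e) ∂ν := by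
  have horbit (x : X) : ∫ g, f (g • x) ∂ν = ∫ g, f (g • e) ∂ν := by
    obtain ⟨k, rfl⟩ := MulAction.exists_smul_eq G e x
    simp only [smul_smul]
    exact integral_mul_right_eq_self (fun g => f (g • e)) k
  have hswap := integral_integral_swap (μ := ν) (ν := μ) (f := fun g x => f (g • x))
    ((hf.comp continuous_smul).integrable_of_hasCompactSupport (.of_compactSpace _))
  simpa [integral_smul_eq_self, horbit] using hswap

lemma integral_intervalIntegral_mul_right [ContinuousMul G] (ν : Measure G) [IsFiniteMeasure ν]
    [ν.IsMulRightInvariant] {f : G → ℝ} (hf : Continuous f) {γ : ℝ → G} (hγ : Continuous γ)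
    {a b : ℝ} (hab : a ≤ b) :
    ∫ g, (∫ θ in a..b, f (g * γ θ)) ∂ν = (b - a) * ∫ g, f g ∂ν := by
  obtain ⟨C, hC⟩ := isCompact_univ.exists_bound_of_continuousOn hf.continuousOn
  have hcont : Continuous fun p : G × ℝ => f (p.1 * γ p.2) := by fun_prop
  simp only [intervalIntegral.integral_of_le hab]
  rw [integral_integral_swap (.of_bound hcont.aestronglyMeasurable C
    (.of_forall fun p => hC _ trivial))]
  simp [integral_mul_right_eq_self f, hab]

end Averaging

section OrthogonalGroup

variable {H : Type*} [NormedAddCommGroup H] [InnerProductSpace ℝ H] [CompleteSpace H]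

instance isTopologicalGroup_unitary : IsTopologicalGroup (unitary (H →L[ℝ] H)) := inferInstance

instance compactSpace_unitary [FiniteDimensional ℝ H] : CompactSpace (unitary (H →L[ℝ] H)) := by
  refine isCompact_iff_compactSpace.1 (Metric.isCompact_of_isClosed_isBounded isClosed_unitary ?_)
  refine (Metric.isBounded_closedBall (x := (0 : H →L[ℝ] H)) (r := 1)).subset fun A hA => ?_
  rw [mem_closedBall_zero_iff]
  refine A.opNorm_le_bound zero_le_one fun x => ?_
  rw [one_mul, Unitary.norm_map ⟨A, hA⟩]

/-- The orthogonal group, encoded as the unitary elements of `H →L[ℝ] H`, acts on the sphere. -/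
instance sphereUnitaryAction : MulAction (unitary (H →L[ℝ] H)) (Metric.sphere (0 : H) 1) where
  smul A σ := ⟨(A : H →L[ℝ] H) σ, by simp [Unitary.norm_map A]⟩
  one_smul _ := rfl
  mul_smul _ _ _ := rfl

@[simp] lemma coe_unitary_smul (A : unitary (H →L[ℝ] H)) (σ : Metric.sphere (0 : H) 1) :
    ((A • σ : Metric.sphere (0 : H) 1) : H) = (A : H →L[ℝ] H) σ := rfl

instance isIsometricSMul_unitary_sphere :
    IsIsometricSMul (unitary (H →L[ℝ] H)) (Metric.sphere (0 : H) 1) :=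
  ⟨fun A => .of_dist_eq fun _ _ => (Unitary.linearIsometryEquiv A).isometry.dist_eq _ _⟩

instance continuousSMul_unitary_sphere :
    ContinuousSMul (unitary (H →L[ℝ] H)) (Metric.sphere (0 : H) 1) where
  continuous_smul := by
    refine continuous_induced_rng.2 ?_
    change Continuous fun p : unitary (H →L[ℝ] H) × Metric.sphere (0 : H) 1 =>
      (p.1 : H →L[ℝ] H) (p.2 : H)
    fun_prop

instance isPretransitive_unitary_sphere :
    MulAction.IsPretransitive (unitary (H →L[ℝ] H)) (Metric.sphere (0 : H) 1) where
  exists_smul_eq σ τ := by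
    refine ⟨Unitary.linearIsometryEquiv.symm (ℝ ∙ ((σ : H) - τ))ᗮ.reflection, Subtype.ext ?_⟩
    simpa using Submodule.reflection_sub (v := (σ : H)) (w := τ) (by simp)

/-- The one-parameter group of orthogonal maps generated by a skew-adjoint operator. -/
def expUnitary (J : skewAdjoint (H →L[ℝ] H)) (θ : ℝ) : unitary (H →L[ℝ] H) :=
  ⟨NormedSpace.exp (θ • (J : H →L[ℝ] H)),
    letI := NormedAlgebra.restrictScalars ℚ ℝ (H →L[ℝ] H)
    NormedSpace.exp_mem_unitary_of_mem_skewAdjoint (θ • J).2⟩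

lemma hasDerivAt_coe_expUnitary (J : skewAdjoint (H →L[ℝ] H)) (θ : ℝ) :
    HasDerivAt (fun s => (expUnitary J s : H →L[ℝ] H))
      ((expUnitary J θ : H →L[ℝ] H) * (J : H →L[ℝ] H)) θ :=
  hasDerivAt_exp_smul_const (J : H →L[ℝ] H) θ

lemma continuous_expUnitary (J : skewAdjoint (H →L[ℝ] H)) : Continuous (expUnitary J) :=
  continuous_induced_rng.2 <|
    continuous_iff_continuousAt.2 fun θ => (hasDerivAt_coe_expUnitary J θ).continuousAt

lemma expUnitary_zero (J : skewAdjoint (H →L[ℝ] H)) : expUnitary J 0 = 1 := by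
  ext1
  simp [expUnitary]

lemma commute_expUnitary (J : skewAdjoint (H →L[ℝ] H)) (θ : ℝ) :
    Commute (expUnitary J θ : H →L[ℝ] H) (J : H →L[ℝ] H) :=
  ((Commute.refl _).smul_left θ).exp_left

lemma hasDerivAt_expUnitary_apply (J : skewAdjoint (H →L[ℝ] H)) (θ : ℝ) (x : H) :
    HasDerivAt (fun s => (expUnitary J s : H →L[ℝ] H) x)
      ((expUnitary J θ : H →L[ℝ] H) ((J : H →L[ℝ] H) x)) θ :=
  (hasDerivAt_coe_expUnitary J θ).clm_apply (hasDerivAt_const θ x) |>.congr_deriv (by simp)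

/-- The generator of the rotations of the plane spanned by orthonormal vectors `v`, `w`. -/
def planeRotationGenerator (v w : H) : skewAdjoint (H →L[ℝ] H) :=
  ⟨InnerProductSpace.rankOne ℝ w v - InnerProductSpace.rankOne ℝ v w, by
    simp [skewAdjoint.mem_iff, ContinuousLinearMap.star_eq_adjoint]⟩

lemma planeRotationGenerator_apply (v w x : H) :
    (planeRotationGenerator v w : H →L[ℝ] H) x = ⟪v, x⟫ • w - ⟪w, x⟫ • v := rfl

lemma expUnitary_planeRotationGenerator_apply {v w : H} (hv : ‖v‖ = 1) (hw : ‖w‖ = 1)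
    (hvw : ⟪v, w⟫ = 0) (θ : ℝ) :
    (expUnitary (planeRotationGenerator v w) θ : H →L[ℝ] H) v =
      Real.cos θ • v + Real.sin θ • w := by
  set J := planeRotationGenerator v w
  have hJv : (J : H →L[ℝ] H) v = w := by
    simp [J, planeRotationGenerator_apply, hv, real_inner_comm v w, hvw]
  have hJw : (J : H →L[ℝ] H) w = -v := by simp [J, planeRotationGenerator_apply, hw, hvw]
  have hflow (s : ℝ) : HasDerivAt (fun r => (expUnitary J r : H →L[ℝ] H) v)
      ((J : H →L[ℝ] H) ((expUnitary J s : H →L[ℝ] H) v)) s :=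
    (hasDerivAt_expUnitary_apply J s v).congr_deriv
      (DFunLike.congr_fun (commute_expUnitary J s).eq v)
  have hcircle (s : ℝ) : HasDerivAt (fun r => Real.cos r • v + Real.sin r • w)
      ((J : H →L[ℝ] H) (Real.cos s • v + Real.sin s • w)) s := by
    refine (((Real.hasDerivAt_cos s).smul_const v).add
      ((Real.hasDerivAt_sin s).smul_const w)).congr_deriv ?_
    rw [map_add, map_smul, map_smul, hJv, hJw]
    module
  exact congrFun (ODE_solution_unique_univ (v := fun _ => (J : H →L[ℝ] H)) (s := fun _ => Set.univ)
    (t₀ := 0) (fun _ => (J : H →L[ℝ] H).lipschitz.lipschitzOnWith)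
    (fun s => ⟨hflow s, trivial⟩) (fun s => ⟨hcircle s, trivial⟩)
    (by simp [expUnitary_zero])) θ

end OrthogonalGroup

section SurfaceMeasure

variable {H : Type*} [NormedAddCommGroup H] [InnerProductSpace ℝ H] [MeasurableSpace H]
  [BorelSpace H] {n : ℕ} [Fact (Module.finrank ℝ H = n + 1)]

lemma finiteAtFilter_hausdorffMeasure_nhds_stereographic_symm {v : H} (hv : ‖v‖ = 1)
    (w : (ℝ ∙ v)ᗮ) :
    (μH[n] : Measure (Metric.sphere (0 : H) 1)).FiniteAtFilter
      (nhds ((stereographic hv).symm w)) := by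
  have : FiniteDimensional ℝ H := .of_fact_finrank_eq_succ n
  have : IsLocallyFiniteMeasure (μH[n] : Measure (ℝ ∙ v)ᗮ) := by
    rw [← Submodule.finrank_orthogonal_span_singleton (𝕜 := ℝ) (n := n)
      (norm_ne_zero_iff.1 (hv.trans_ne one_ne_zero))]
    infer_instance
  obtain ⟨K, U, hU, hK⟩ := (contDiff_stereoInvFunAux.comp
    (ℝ ∙ v)ᗮ.subtypeL.contDiff).contDiffAt (x := w) |>.exists_lipschitzOnWith
  have hlip : LipschitzOnWith K (stereographic hv).symm U := fun y hy z hz => hK hy hz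
  obtain ⟨s, hs, hs_top⟩ := Measure.finiteAt_nhds (μH[n] : Measure (ℝ ∙ v)ᗮ) w
  refine ⟨(stereographic hv).symm '' (U ∩ s), ?_, ?_⟩
  · exact (isOpenEmbedding_stereographic_symm hv).image_mem_nhds.2 (Filter.inter_mem hU hs)
  · refine ((hlip.mono Set.inter_subset_left).hausdorffMeasure_image_le n.cast_nonneg).trans_lt ?_
    exact ENNReal.mul_lt_top (by simp) ((measure_mono Set.inter_subset_right).trans_lt hs_top)

lemma isFiniteMeasure_hausdorffMeasure_sphere :
    IsFiniteMeasure (μH[n] : Measure (Metric.sphere (0 : H) 1)) := by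
  have : FiniteDimensional ℝ H := .of_fact_finrank_eq_succ n
  suffices IsLocallyFiniteMeasure (μH[n] : Measure (Metric.sphere (0 : H) 1)) from
    inferInstance
  refine ⟨fun x => ?_⟩
  have hx : (stereographic (norm_eq_of_mem_sphere (-x))).symm 0 = x := by
    rw [← stereographic_neg_apply x, (stereographic (norm_eq_of_mem_sphere (-x))).left_inv]
    rw [stereographic_source]
    exact ne_neg_of_mem_unit_sphere ℝ x
  exact hx ▸ finiteAtFilter_hausdorffMeasure_nhds_stereographic_symm (norm_eq_of_mem_sphere (-x)) 0

instance isFiniteMeasure_sphMeasure (d : ℕ) : IsFiniteMeasure (sphMeasure d) := by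
  obtain _ | n := d
  · have : IsEmpty (Sph 0) := ⟨fun σ => by simpa [Subsingleton.elim (σ : E 0) 0] using σ.2⟩
    infer_instance
  · have : Fact (Module.finrank ℝ (E (n + 1)) = n + 1) := ⟨by simp⟩
    simpa [sphMeasure] using isFiniteMeasure_hausdorffMeasure_sphere (H := E (n + 1)) (n := n)

instance smulInvariantMeasure_sphMeasure (d : ℕ) :
    SMulInvariantMeasure (unitary (E d →L[ℝ] E d)) (Sph d) (sphMeasure d) :=
  inferInstanceAs (SMulInvariantMeasure _ _ μH[(d : ℝ) - 1])

end SurfaceMeasure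

section SphericalCalculus

variable {d : ℕ}

/-- The `i`-th Cartesian component of the spherical gradient, as an operator on functions on the
sphere. -/
def sphDeriv (i : Fin d) (F : Sph d → ℝ) (σ : Sph d) : ℝ :=
  fderiv ℝ (homogExt F) (σ : E d) (EuclideanSpace.single i 1)

/-- The `i`-th coordinate function on the sphere. -/
def sphCoord (i : Fin d) (σ : Sph d) : ℝ := (σ : E d) i

lemma Sph.ne_zero (σ : Sph d) : (σ : E d) ≠ 0 :=
  ne_zero_of_mem_unit_sphere σ

/-- Radial projection of a nonzero vector to the sphere. -/
def sphProj (x : E d) (hx : x ≠ 0) : Sph d :=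
  ⟨‖x‖⁻¹ • x, by
    rw [mem_sphere_zero_iff_norm, norm_smul, norm_inv, norm_norm,
      inv_mul_cancel₀ (norm_ne_zero_iff.mpr hx)]⟩

lemma homogExt_of_ne (F : Sph d → ℝ) {x : E d} (hx : x ≠ 0) :
    homogExt F x = F (sphProj x hx) := dif_neg hx

@[simp] lemma homogExt_zero (F : Sph d → ℝ) : homogExt F 0 = 0 := dif_pos rfl

lemma sphProj_coe (σ : Sph d) : sphProj (σ : E d) σ.ne_zero = σ := by
  ext1
  simp [sphProj]

@[simp] lemma homogExt_coe (F : Sph d → ℝ) (σ : Sph d) : homogExt F σ = F σ := by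
  rw [homogExt_of_ne F σ.ne_zero, sphProj_coe]

lemma sphProj_smul {c : ℝ} (hc : 0 < c) {x : E d} (hx : x ≠ 0) :
    sphProj (c • x) (smul_ne_zero hc.ne' hx) = sphProj x hx := by
  ext1
  simp only [sphProj, norm_smul, Real.norm_eq_abs, abs_of_pos hc, smul_smul]
  congr 1
  field_simp

lemma homogExt_smul (F : Sph d → ℝ) {c : ℝ} (hc : 0 < c) (x : E d) :
    homogExt F (c • x) = homogExt F x := by
  by_cases hx : x = 0
  · simp [hx]
  · rw [homogExt_of_ne F hx, homogExt_of_ne F (smul_ne_zero hc.ne' hx), sphProj_smul hc hx]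

lemma fderiv_homogExt_smul (F : Sph d → ℝ) {c : ℝ} (hc : 0 < c) (x : E d) :
    fderiv ℝ (homogExt F) (c • x) = c⁻¹ • fderiv ℝ (homogExt F) x := by
  have hinvariant : (fun y => homogExt F (c • y)) = homogExt F := funext (homogExt_smul F hc)
  rw [eq_inv_smul_iff₀ hc.ne', ← fderiv_comp_smul, hinvariant]

lemma homogExt_sphDeriv (i : Fin d) (F : Sph d → ℝ) {x : E d} (hx : x ≠ 0) :
    homogExt (sphDeriv i F) x = ‖x‖ * fderiv ℝ (homogExt F) x (EuclideanSpace.single i 1) := by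
  rw [homogExt_of_ne _ hx, sphDeriv, sphProj,
    fderiv_homogExt_smul F (inv_pos.2 (norm_pos_iff.2 hx)), inv_inv]
  rfl

lemma homogExt_sphCoord (i : Fin d) (x : E d) : homogExt (sphCoord i) x = ‖x‖⁻¹ * x i := by
  by_cases hx : x = 0
  · simp [hx]
  · rw [homogExt_of_ne _ hx]; rfl

lemma homogExt_mul (F G : Sph d → ℝ) :
    homogExt (fun σ => F σ * G σ) = fun x => homogExt F x * homogExt G x := by
  ext x
  by_cases hx : x = 0
  · simp [hx]
  · simp only [homogExt_of_ne _ hx]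

lemma homogExt_add (F G : Sph d → ℝ) :
    homogExt (fun σ => F σ + G σ) = fun x => homogExt F x + homogExt G x := by
  ext x
  by_cases hx : x = 0
  · simp [hx]
  · simp only [homogExt_of_ne _ hx]

lemma SphSmooth.contDiffAt {F : Sph d → ℝ} (hF : SphSmooth F) {x : E d} (hx : x ≠ 0) :
    ContDiffAt ℝ (⊤ : ℕ∞) (homogExt F) x :=
  (hF x hx).contDiffAt (isOpen_ne.mem_nhds hx)

lemma SphSmooth.differentiableAt {F : Sph d → ℝ} (hF : SphSmooth F) {x : E d} (hx : x ≠ 0) :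
    DifferentiableAt ℝ (homogExt F) x :=
  (hF.contDiffAt hx).differentiableAt (by simp)

lemma SphSmooth.mul {F G : Sph d → ℝ} (hF : SphSmooth F) (hG : SphSmooth G) :
    SphSmooth (fun σ => F σ * G σ) := by
  rw [SphSmooth, homogExt_mul]
  exact ContDiffOn.mul hF hG

lemma SphSmooth.add {F G : Sph d → ℝ} (hF : SphSmooth F) (hG : SphSmooth G) :
    SphSmooth (fun σ => F σ + G σ) := by
  rw [SphSmooth, homogExt_add]
  exact ContDiffOn.add hF hG

lemma sphSmooth_const (c : ℝ) : SphSmooth (fun _ : Sph d => c) :=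
  (contDiffOn_const (c := c)).congr fun _ hx => homogExt_of_ne _ hx

lemma SphSmooth.const_mul {F : Sph d → ℝ} (hF : SphSmooth F) (c : ℝ) :
    SphSmooth (fun σ => c * F σ) := (sphSmooth_const c).mul hF

lemma SphSmooth.sub {F G : Sph d → ℝ} (hF : SphSmooth F) (hG : SphSmooth G) :
    SphSmooth (fun σ => F σ - G σ) := by
  simpa [sub_eq_add_neg] using hF.add (hG.const_mul (-1))

lemma sphSmooth_sum {ι : Type*} (s : Finset ι) {F : ι → Sph d → ℝ}
    (hF : ∀ i ∈ s, SphSmooth (F i)) : SphSmooth (fun σ => ∑ i ∈ s, F i σ) := by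
  classical
  induction s using Finset.induction_on with
  | empty => simpa using sphSmooth_const 0
  | insert a s ha ih =>
    simp only [Finset.sum_insert ha]
    exact (hF a (by simp)).add (ih fun i hi => hF i (by simp [hi]))

lemma sphSmooth_sphCoord (i : Fin d) : SphSmooth (sphCoord i) := by
  rw [SphSmooth, funext (homogExt_sphCoord i)]
  intro x hx
  refine ContDiffAt.contDiffWithinAt (ContDiffAt.mul ?_ ?_)
  · exact (contDiffAt_norm ℝ hx).inv (norm_ne_zero_iff.2 hx)
  · exact (EuclideanSpace.proj (𝕜 := ℝ) i).contDiff.contDiffAt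

lemma SphSmooth.smooth_sphDeriv {F : Sph d → ℝ} (hF : SphSmooth F) (i : Fin d) :
    SphSmooth (sphDeriv i F) := by
  intro x hx
  refine ContDiffAt.contDiffWithinAt (((contDiffAt_norm ℝ hx).mul
    (((hF.contDiffAt hx).fderiv_right (m := (⊤ : ℕ∞)) (by simp)).clm_apply
      (contDiffAt_const (c := EuclideanSpace.single i 1)))).congr_of_eventuallyEq ?_)
  filter_upwards [isOpen_ne.mem_nhds hx] with y hy using homogExt_sphDeriv i F hy

lemma SphSmooth.continuous {F : Sph d → ℝ} (hF : SphSmooth F) : Continuous F := by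
  rw [← funext (homogExt_coe F), continuous_iff_continuousAt]
  exact fun σ => ContinuousAt.comp (f := fun σ : Sph d => (σ : E d))
    (hF.differentiableAt σ.ne_zero).continuousAt continuous_subtype_val.continuousAt

lemma sphDeriv_mul {F G : Sph d → ℝ} (hF : SphSmooth F) (hG : SphSmooth G) (i : Fin d) (σ : Sph d) :
    sphDeriv i (fun τ => F τ * G τ) σ = F σ * sphDeriv i G σ + G σ * sphDeriv i F σ := by
  rw [sphDeriv, homogExt_mul,
    fderiv_fun_mul (hF.differentiableAt σ.ne_zero) (hG.differentiableAt σ.ne_zero)]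
  simp [sphDeriv]

lemma sphDeriv_add {F G : Sph d → ℝ} (hF : SphSmooth F) (hG : SphSmooth G) (i : Fin d) (σ : Sph d) :
    sphDeriv i (fun τ => F τ + G τ) σ = sphDeriv i F σ + sphDeriv i G σ := by
  rw [sphDeriv, homogExt_add,
    fderiv_fun_add (hF.differentiableAt σ.ne_zero) (hG.differentiableAt σ.ne_zero)]
  simp [sphDeriv]

lemma sphDeriv_const (c : ℝ) (i : Fin d) (σ : Sph d) : sphDeriv i (fun _ => c) σ = 0 := by
  have hext : homogExt (fun _ : Sph d => c) =ᶠ[nhds (σ : E d)] fun _ => c := by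
    filter_upwards [isOpen_ne.mem_nhds σ.ne_zero] with y hy using homogExt_of_ne _ hy
  simp [sphDeriv, hext.fderiv_eq]

lemma sphDeriv_const_mul {F : Sph d → ℝ} (hF : SphSmooth F) (c : ℝ) (i : Fin d) (σ : Sph d) :
    sphDeriv i (fun τ => c * F τ) σ = c * sphDeriv i F σ := by
  rw [sphDeriv_mul (sphSmooth_const c) hF, sphDeriv_const]; ring

lemma sphDeriv_sub {F G : Sph d → ℝ} (hF : SphSmooth F) (hG : SphSmooth G) (i : Fin d) (σ : Sph d) :
    sphDeriv i (fun τ => F τ - G τ) σ = sphDeriv i F σ - sphDeriv i G σ := by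
  have hadd := sphDeriv_add hF (hG.const_mul (-1)) i σ
  rw [sphDeriv_const_mul hG] at hadd
  simpa [sub_eq_add_neg] using hadd

lemma sphDeriv_sum {ι : Type*} (s : Finset ι) {F : ι → Sph d → ℝ}
    (hF : ∀ j ∈ s, SphSmooth (F j)) (i : Fin d) (σ : Sph d) :
    sphDeriv i (fun τ => ∑ j ∈ s, F j τ) σ = ∑ j ∈ s, sphDeriv i (F j) σ := by
  classical
  induction s using Finset.induction_on with
  | empty => simpa using sphDeriv_const 0 i σ
  | insert a s ha ih =>
    simp only [Finset.sum_insert ha]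
    rw [sphDeriv_add (hF a (by simp)) (sphSmooth_sum s fun i hi => hF i (by simp [hi])),
      ih fun i hi => hF i (by simp [hi])]

lemma fderiv_norm_apply {H : Type*} [NormedAddCommGroup H] [InnerProductSpace ℝ H] {x : H}
    (hx : x ≠ 0) (v : H) : fderiv ℝ (fun y : H => ‖y‖) x v = ‖x‖⁻¹ * ⟪x, v⟫ := by
  have hnorm : DifferentiableAt ℝ (fun y : H => ‖y‖) x :=
    (contDiffAt_norm ℝ hx (n := 1)).differentiableAt (by simp)
  have hsq := DFunLike.congr_fun
    ((hnorm.hasFDerivAt.pow 2).unique (hasStrictFDerivAt_norm_sq x).hasFDerivAt) v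
  simp only [smul_apply, smul_eq_mul, nsmul_eq_mul, innerSL_apply_apply,
    Nat.cast_ofNat, Nat.add_one_sub_one, pow_one] at hsq
  field_simp [norm_ne_zero_iff.2 hx]
  linarith

lemma sphDeriv_sphCoord (i j : Fin d) (σ : Sph d) :
    sphDeriv i (sphCoord j) σ = (if i = j then 1 else 0) - sphCoord i σ * sphCoord j σ := by
  have hnorm : DifferentiableAt ℝ (fun y : E d => ‖y‖) (σ : E d) :=
    (contDiffAt_norm ℝ σ.ne_zero (n := 1)).differentiableAt (by simp)
  have hinv : HasFDerivAt (fun y : E d => ‖y‖⁻¹) _ (σ : E d) :=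
    (hasDerivAt_inv (norm_ne_zero_iff.2 σ.ne_zero)).comp_hasFDerivAt _ hnorm.hasFDerivAt
  have hproj : HasFDerivAt (fun x : E d => x j) (EuclideanSpace.proj (𝕜 := ℝ) j) (σ : E d) :=
    (EuclideanSpace.proj (𝕜 := ℝ) j).hasFDerivAt
  have hext := (hinv.mul hproj).congr_of_eventuallyEq (.of_forall (homogExt_sphCoord j))
  rw [sphDeriv, hext.fderiv]
  simp [fderiv_norm_apply σ.ne_zero, sphCoord, EuclideanSpace.inner_single_right,
    eq_comm (a := i), mul_comm, sub_eq_add_neg]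

lemma sum_sphCoord_sq (σ : Sph d) : ∑ i, sphCoord i σ ^ 2 = 1 := by
  simp only [sphCoord, ← EuclideanSpace.real_norm_sq_eq, norm_eq_of_mem_sphere, one_pow]

lemma sphGrad_apply (F : Sph d → ℝ) (σ : Sph d) (i : Fin d) : sphGrad F σ i = sphDeriv i F σ := by
  rw [sphDeriv, ← inner_gradient_left, EuclideanSpace.inner_single_right]
  simp [sphGrad]

lemma inner_sphGrad (F G : Sph d → ℝ) (σ : Sph d) :
    ⟪sphGrad F σ, sphGrad G σ⟫ = ∑ i, sphDeriv i F σ * sphDeriv i G σ := by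
  simp [PiLp.inner_apply, sphGrad_apply, mul_comm]

lemma norm_sphGrad_sq (F : Sph d → ℝ) (σ : Sph d) :
    ‖sphGrad F σ‖ ^ 2 = ∑ i, sphDeriv i F σ ^ 2 := by
  simp [EuclideanSpace.real_norm_sq_eq, sphGrad_apply]

lemma fderiv_homogExt_apply (F : Sph d → ℝ) (σ : Sph d) (v : E d) :
    fderiv ℝ (homogExt F) (σ : E d) v = ∑ i, v i * sphDeriv i F σ := by
  rw [← inner_gradient_left]
  simp only [PiLp.inner_apply, RCLike.inner_apply, conj_trivial, ← sphGrad_apply, sphGrad]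

lemma SphSmooth.hasDerivAt_comp {F : Sph d → ℝ} (hF : SphSmooth F) {γ : ℝ → Sph d} {t : ℝ}
    {v : E d} (hγ : HasDerivAt (fun s => (γ s : E d)) v t) :
    HasDerivAt (fun s => F (γ s)) (fderiv ℝ (homogExt F) (γ t : E d) v) t := by
  simpa [Function.comp_def] using
    (hF.differentiableAt (γ t).ne_zero).hasFDerivAt.comp_hasDerivAt t hγ

lemma fderiv_homogExt_self (F : Sph d → ℝ) (x : E d) :
    fderiv ℝ (homogExt F) x x = 0 := by
  by_cases hF : DifferentiableAt ℝ (homogExt F) x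
  · have hray : HasDerivAt (fun t : ℝ => t • x) x 1 := by
      simpa using (hasDerivAt_id (1 : ℝ)).smul_const x
    have hconst : (fun t : ℝ => homogExt F (t • x)) =ᶠ[nhds 1] fun _ => homogExt F x := by
      filter_upwards [lt_mem_nhds (zero_lt_one' ℝ)] with t ht using homogExt_smul F ht x
    have hderiv : HasDerivAt (fun t : ℝ => homogExt F (t • x)) (fderiv ℝ (homogExt F) x x) 1 :=
      HasFDerivAt.comp_hasDerivAt (l := homogExt F) 1 (by simpa using hF.hasFDerivAt) hray
    exact (hderiv.congr_of_eventuallyEq hconst.symm).unique (hasDerivAt_const _ _)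
  · simp [fderiv_zero_of_not_differentiableAt hF]

lemma sum_sphCoord_mul_sphDeriv (F : Sph d → ℝ) (σ : Sph d) :
    ∑ i, sphCoord i σ * sphDeriv i F σ = 0 :=
  (fderiv_homogExt_apply F σ σ).symm.trans (fderiv_homogExt_self F σ)

lemma sphDeriv_sphCoord_mul {F : Sph d → ℝ} (hF : SphSmooth F) (i j : Fin d)
    (σ : Sph d) :
    sphDeriv i (fun τ => sphCoord j τ * F τ) σ =
      sphCoord j σ * sphDeriv i F σ + (if i = j then F σ else 0)
        - F σ * (sphCoord i σ * sphCoord j σ) := by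
  rw [sphDeriv_mul (sphSmooth_sphCoord j) hF, sphDeriv_sphCoord]
  split_ifs <;> ring

lemma sum_sphCoord_mul_sphDeriv_sphCoord_mul {F : Sph d → ℝ} (hF : SphSmooth F)
    (i : Fin d) (σ : Sph d) :
    ∑ j, sphCoord j σ * sphDeriv i (fun τ => sphCoord j τ * F τ) σ = sphDeriv i F σ := by
  have hterm (j : Fin d) : sphCoord j σ * sphDeriv i (fun τ => sphCoord j τ * F τ) σ =
      sphCoord j σ ^ 2 * (sphDeriv i F σ - F σ * sphCoord i σ)
        + if i = j then sphCoord i σ * F σ else 0 := by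
    rw [sphDeriv_sphCoord_mul hF]
    split_ifs with hij <;> [subst hij; skip] <;> ring
  simp_rw [hterm, Finset.sum_add_distrib, ← Finset.sum_mul, sum_sphCoord_sq]
  simp only [Finset.sum_ite_eq, Finset.mem_univ, if_true]
  ring

lemma sum_sphDeriv_sphCoord_mul {F : Sph d → ℝ} (hF : SphSmooth F) (σ : Sph d) :
    ∑ j, sphDeriv j (fun τ => sphCoord j τ * F τ) σ = ((d : ℝ) - 1) * F σ := by
  simp_rw [sphDeriv_sphCoord_mul hF, if_true, Finset.sum_sub_distrib, Finset.sum_add_distrib,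
    ← Finset.mul_sum, ← sq, sum_sphCoord_sq, sum_sphCoord_mul_sphDeriv, Finset.sum_const,
    Finset.card_univ, Fintype.card_fin, nsmul_eq_mul]
  ring

lemma SphSmooth.smooth_inner_sphGrad {F G : Sph d → ℝ} (hF : SphSmooth F) (hG : SphSmooth G) :
    SphSmooth (fun σ => ⟪sphGrad F σ, sphGrad G σ⟫) := by
  simp only [inner_sphGrad]
  exact sphSmooth_sum _ fun i _ => (hF.smooth_sphDeriv i).mul (hG.smooth_sphDeriv i)

lemma SphSmooth.differentiableAt_fderiv {F : Sph d → ℝ} (hF : SphSmooth F) {x : E d}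
    (hx : x ≠ 0) : DifferentiableAt ℝ (fderiv ℝ (homogExt F)) x :=
  ((hF.contDiffAt hx).fderiv_right (m := 1) (WithTop.coe_le_coe.2 le_top)).differentiableAt
    (by simp)

lemma sphDeriv_sphDeriv {F : Sph d → ℝ} (hF : SphSmooth F) (i j : Fin d) (σ : Sph d) :
    sphDeriv i (sphDeriv j F) σ = sphCoord i σ * sphDeriv j F σ +
      fderiv ℝ (fun y => fderiv ℝ (homogExt F) y (EuclideanSpace.single j 1)) (σ : E d)
        (EuclideanSpace.single i 1) := by
  have hext : homogExt (sphDeriv j F) =ᶠ[nhds (σ : E d)]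
      fun x => ‖x‖ * fderiv ℝ (homogExt F) x (EuclideanSpace.single j 1) := by
    filter_upwards [isOpen_ne.mem_nhds σ.ne_zero] with y hy using homogExt_sphDeriv j F hy
  have hnorm : DifferentiableAt ℝ (fun y : E d => ‖y‖) (σ : E d) :=
    (contDiffAt_norm ℝ σ.ne_zero (n := 1)).differentiableAt (by simp)
  rw [sphDeriv, hext.fderiv_eq, fderiv_fun_mul hnorm
    ((hF.differentiableAt_fderiv σ.ne_zero).clm_apply (differentiableAt_const _))]
  simp [fderiv_norm_apply σ.ne_zero, EuclideanSpace.inner_single_right, sphCoord, sphDeriv,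
    mul_comm, add_comm]

lemma sphDeriv_comm {F : Sph d → ℝ} (hF : SphSmooth F) (i j : Fin d) (σ : Sph d) :
    sphDeriv j (sphDeriv i F) σ =
      sphDeriv i (sphDeriv j F) σ + sphCoord j σ * sphDeriv i F σ
        - sphCoord i σ * sphDeriv j F σ := by
  have hsymm : IsSymmSndFDerivAt ℝ (homogExt F) (σ : E d) :=
    (hF.contDiffAt σ.ne_zero).isSymmSndFDerivAt
      ((minSmoothness_of_isRCLikeNormedField (𝕜 := ℝ)).le.trans (WithTop.coe_le_coe.2 le_top))
  have hsnd (k : Fin d) (v : E d) :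
      fderiv ℝ (fun y => fderiv ℝ (homogExt F) y (EuclideanSpace.single k 1)) (σ : E d) v
        = fderiv ℝ (fderiv ℝ (homogExt F)) (σ : E d) v (EuclideanSpace.single k 1) := by
    rw [fderiv_clm_apply (hF.differentiableAt_fderiv σ.ne_zero) (differentiableAt_const _)]
    simp
  rw [sphDeriv_sphDeriv hF, sphDeriv_sphDeriv hF, hsnd, hsnd, hsymm.eq]
  ring

lemma sphLap_eq_sum_sphDeriv {F : Sph d → ℝ} (hF : SphSmooth F) (σ : Sph d) :
    sphLap F σ = ∑ i, sphDeriv i (sphDeriv i F) σ := by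
  simp_rw [sphDeriv_sphDeriv hF, Finset.sum_add_distrib, sum_sphCoord_mul_sphDeriv, zero_add]
  rfl

lemma sphLap_const (c : ℝ) (σ : Sph d) : sphLap (fun _ => c) σ = 0 := by
  have hderiv (i : Fin d) : sphDeriv i (fun _ => c) = fun _ => 0 := funext (sphDeriv_const c i)
  simp_rw [sphLap_eq_sum_sphDeriv (sphSmooth_const c), hderiv, sphDeriv_const,
    Finset.sum_const_zero]

lemma SphSmooth.smooth_sphLap {F : Sph d → ℝ} (hF : SphSmooth F) : SphSmooth (sphLap F) := by
  rw [funext (sphLap_eq_sum_sphDeriv hF)]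
  exact sphSmooth_sum _ fun i _ => (hF.smooth_sphDeriv i).smooth_sphDeriv i

end SphericalCalculus

section Green

variable {d : ℕ} {μ : Measure (Sph d)} [IsFiniteMeasure μ] {F G : Sph d → ℝ}

lemma SphSmooth.integrable (hF : SphSmooth F) : Integrable F μ :=
  hF.continuous.integrable_of_hasCompactSupport (.of_compactSpace F)

lemma SphSmooth.continuous_fderiv_homogExt_apply {X : Type*} [TopologicalSpace X]
    (hF : SphSmooth F) {p : X → Sph d} (hp : Continuous p) {v : X → E d} (hv : Continuous v) :
    Continuous fun x => fderiv ℝ (homogExt F) (p x : E d) (v x) := by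
  simp only [fderiv_homogExt_apply]
  exact continuous_finsetSum _ fun i _ =>
    ((EuclideanSpace.proj i).continuous.comp hv).mul ((hF.smooth_sphDeriv i).continuous.comp hp)

lemma SphSmooth.hasDerivAt_comp_expUnitary_smul (hF : SphSmooth F)
    (J : skewAdjoint (E d →L[ℝ] E d)) (σ : Sph d) (θ : ℝ) :
    HasDerivAt (fun s => F (expUnitary J s • σ))
      (fderiv ℝ (homogExt F) (expUnitary J θ • σ : Sph d)
        ((J : E d →L[ℝ] E d) (expUnitary J θ • σ : Sph d))) θ :=
  hF.hasDerivAt_comp <| (hasDerivAt_expUnitary_apply J θ σ).congr_deriv <|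
    DFunLike.congr_fun (commute_expUnitary J θ).eq (σ : E d)

variable [SMulInvariantMeasure (unitary (E d →L[ℝ] E d)) (Sph d) μ]

lemma SphSmooth.integral_fderiv_skewAdjoint_eq_zero (hF : SphSmooth F)
    (J : skewAdjoint (E d →L[ℝ] E d)) :
    ∫ σ : Sph d, fderiv ℝ (homogExt F) (σ : E d) ((J : E d →L[ℝ] E d) σ) ∂μ = 0 := by
  have hrot : Continuous fun p : ℝ × Sph d => expUnitary J p.1 • p.2 :=
    ((continuous_expUnitary J).comp continuous_fst).smul continuous_snd
  have hfield := hF.continuous_fderiv_homogExt_apply continuous_id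
    ((J : E d →L[ℝ] E d).continuous.comp continuous_subtype_val)
  have hderiv := hasDerivAt_integral_of_continuousOn_prod (μ := μ) isOpen_univ
    (fun θ _ => hF.continuous.comp (continuous_const_smul (expUnitary J θ)))
    (fun θ _ σ => hF.hasDerivAt_comp_expUnitary_smul J σ θ)
    (hfield.comp hrot).continuousOn (Set.mem_univ 0)
  simp only [Function.comp_apply, integral_smul_eq_self, expUnitary_zero, one_smul] at hderiv
  exact hderiv.unique (hasDerivAt_const _ _)

lemma SphSmooth.integral_sphCoord_mul_sphDeriv_sub (hF : SphSmooth F) (i j : Fin d) :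
    ∫ σ, (sphCoord j σ * sphDeriv i F σ - sphCoord i σ * sphDeriv j F σ) ∂μ = 0 := by
  rw [← hF.integral_fderiv_skewAdjoint_eq_zero (μ := μ)
    (planeRotationGenerator (EuclideanSpace.single j 1) (EuclideanSpace.single i 1))]
  simp [planeRotationGenerator_apply, sphDeriv, sphCoord, EuclideanSpace.inner_single_left]

lemma SphSmooth.integral_sphDeriv (hF : SphSmooth F) (i : Fin d) :
    ∫ σ, sphDeriv i F σ ∂μ = ((d : ℝ) - 1) * ∫ σ, sphCoord i σ * F σ ∂μ := by
  have hcoord (j : Fin d) : SphSmooth (fun τ => sphCoord j τ * F τ) :=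
    (sphSmooth_sphCoord j).mul hF
  have hfield (j : Fin d) : SphSmooth (fun σ =>
      sphCoord j σ * sphDeriv i (fun τ => sphCoord j τ * F τ) σ
        - sphCoord i σ * sphDeriv j (fun τ => sphCoord j τ * F τ) σ) :=
    ((sphSmooth_sphCoord j).mul ((hcoord j).smooth_sphDeriv i)).sub
      ((sphSmooth_sphCoord i).mul ((hcoord j).smooth_sphDeriv j))
  -- A rotation field has zero mean, and contracting with the position vector recovers `δ_i`.
  have hdecomp (σ : Sph d) : sphDeriv i F σ = ((d : ℝ) - 1) * (sphCoord i σ * F σ) +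
      ∑ j, (sphCoord j σ * sphDeriv i (fun τ => sphCoord j τ * F τ) σ
        - sphCoord i σ * sphDeriv j (fun τ => sphCoord j τ * F τ) σ) := by
    rw [Finset.sum_sub_distrib, ← Finset.mul_sum, sum_sphCoord_mul_sphDeriv_sphCoord_mul hF,
      sum_sphDeriv_sphCoord_mul hF]
    ring
  simp_rw [hdecomp]
  rw [integral_add ((hcoord i).const_mul _).integrable
    (integrable_finsetSum _ fun j _ => (hfield j).integrable),
    integral_finsetSum _ fun j _ => (hfield j).integrable, integral_const_mul]
  simp [(hcoord _).integral_sphCoord_mul_sphDeriv_sub]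

lemma integral_mul_sphLap (hF : SphSmooth F) (hG : SphSmooth G) :
    ∫ σ, F σ * sphLap G σ ∂μ = -∫ σ, ⟪sphGrad F σ, sphGrad G σ⟫ ∂μ := by
  have hflux (i : Fin d) : SphSmooth (fun τ => F τ * sphDeriv i G τ) :=
    hF.mul (hG.smooth_sphDeriv i)
  have hdiv (σ : Sph d) : ∑ i, sphDeriv i (fun τ => F τ * sphDeriv i G τ) σ =
      F σ * sphLap G σ + ⟪sphGrad F σ, sphGrad G σ⟫ := by
    simp only [sphDeriv_mul hF (hG.smooth_sphDeriv _), sphLap_eq_sum_sphDeriv hG, inner_sphGrad,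
      Finset.sum_add_distrib, Finset.mul_sum, mul_comm]
  have htangent (σ : Sph d) : ∑ i, sphCoord i σ * (F σ * sphDeriv i G σ) = 0 := by
    simp only [mul_left_comm _ (F σ), ← Finset.mul_sum, sum_sphCoord_mul_sphDeriv, mul_zero]
  have hzero : ∫ σ, ∑ i, sphDeriv i (fun τ => F τ * sphDeriv i G τ) σ ∂μ = 0 := by
    rw [integral_finsetSum _ fun i _ => ((hflux i).smooth_sphDeriv i).integrable]
    simp_rw [(hflux _).integral_sphDeriv]
    rw [← Finset.mul_sum, ← integral_finsetSum _ fun i _ =>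
      ((sphSmooth_sphCoord i).mul (hflux i)).integrable]
    simp [htangent]
  simp_rw [hdiv] at hzero
  rw [integral_add (hF.mul hG.smooth_sphLap).integrable
    (hF.smooth_inner_sphGrad hG).integrable] at hzero
  linarith

lemma integral_mul_sphLap_comm (hF : SphSmooth F) (hG : SphSmooth G) :
    ∫ σ, F σ * sphLap G σ ∂μ = ∫ σ, sphLap F σ * G σ ∂μ := by
  simp_rw [mul_comm (sphLap F _), integral_mul_sphLap hF hG, integral_mul_sphLap hG hF,
    real_inner_comm]

end Green

section OddPoincare

variable {d : ℕ} {V : Sph d → ℝ}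

lemma Sph.continuous_unitary_smul (v : Sph d) :
    Continuous fun A : unitary (E d →L[ℝ] E d) => A • v :=
  continuous_id.smul continuous_const

lemma SphSmooth.continuous_fderiv_homogExt_smul (hV : SphSmooth V) (v w : Sph d) :
    Continuous fun A : unitary (E d →L[ℝ] E d) =>
      fderiv ℝ (homogExt V) (A • v : Sph d) (A • w : Sph d) :=
  hV.continuous_fderiv_homogExt_apply (Sph.continuous_unitary_smul v)
    (continuous_subtype_val.comp (Sph.continuous_unitary_smul w))

lemma coe_expUnitary_planeRotationGenerator_smul {v w : Sph d} (hvw : ⟪(v : E d), (w : E d)⟫ = 0)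
    (θ : ℝ) :
    ((expUnitary (planeRotationGenerator (v : E d) (w : E d)) θ • v : Sph d) : E d) =
      Real.cos θ • (v : E d) + Real.sin θ • (w : E d) :=
  expUnitary_planeRotationGenerator_apply (norm_eq_of_mem_sphere v) (norm_eq_of_mem_sphere w) hvw θ

lemma antiperiodic_comp_expUnitary (hodd : ∀ σ, V (-σ) = -V σ) {v w : Sph d}
    (hvw : ⟪(v : E d), (w : E d)⟫ = 0) (A : unitary (E d →L[ℝ] E d)) :
    Function.Antiperiodic (fun θ =>
      V ((A * expUnitary (planeRotationGenerator (v : E d) (w : E d)) θ) • v)) Real.pi := by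
  intro θ
  simp only [mul_smul, ← hodd]
  congr 1
  ext1
  simp only [coe_neg_sphere, coe_unitary_smul A, coe_expUnitary_planeRotationGenerator_smul hvw,
    Real.cos_add_pi, Real.sin_add_pi, neg_smul, ← neg_add, map_neg]

lemma SphSmooth.hasDerivAt_comp_mul_expUnitary (hV : SphSmooth V) {v w : Sph d}
    (hvw : ⟪(v : E d), (w : E d)⟫ = 0) (A : unitary (E d →L[ℝ] E d)) (θ : ℝ) :
    let R := expUnitary (planeRotationGenerator (v : E d) (w : E d))
    HasDerivAt (fun s => V ((A * R s) • v))
      (fderiv ℝ (homogExt V) ((A * R θ) • v : Sph d) ((A * R θ) • w : Sph d)) θ := by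
  refine hV.hasDerivAt_comp ?_
  have hrot := hasDerivAt_expUnitary_apply (planeRotationGenerator (v : E d) (w : E d)) θ v
  have hgen : (planeRotationGenerator (v : E d) (w : E d) : E d →L[ℝ] E d) v = w := by
    simp [planeRotationGenerator_apply, hvw, real_inner_comm]
  rw [hgen] at hrot
  exact (A : E d →L[ℝ] E d).hasFDerivAt.comp_hasDerivAt θ hrot

/-- Wirtinger's inequality on the great circles `θ ↦ A (cos θ v + sin θ w)`, averaged over `A`. -/
lemma SphSmooth.integral_sq_le_integral_fderiv_sq (hV : SphSmooth V) (hodd : ∀ σ, V (-σ) = -V σ)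
    (ν : Measure (unitary (E d →L[ℝ] E d))) [IsFiniteMeasure ν] [ν.IsMulRightInvariant]
    {v w : Sph d} (hvw : ⟪(v : E d), (w : E d)⟫ = 0) :
    ∫ A, V (A • v) ^ 2 ∂ν ≤
      ∫ A, fderiv ℝ (homogExt V) (A • v : Sph d) (A • w : Sph d) ^ 2 ∂ν := by
  set R := expUnitary (planeRotationGenerator (v : E d) (w : E d))
  have hR : Continuous R := continuous_expUnitary _
  have hvalue := (hV.continuous.comp (Sph.continuous_unitary_smul v)).pow 2
  have hderiv := hV.continuous_fderiv_homogExt_smul v w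
  have hcircle (A : unitary (E d →L[ℝ] E d)) := integral_sq_le_of_antiperiodic
    (hV.hasDerivAt_comp_mul_expUnitary hvw A) (hderiv.comp (continuous_const.mul hR))
    (antiperiodic_comp_expUnitary hodd hvw A)
  have hint {f : unitary (E d →L[ℝ] E d) → ℝ} (hf : Continuous f) :
      Integrable (fun A => ∫ θ in (0 : ℝ)..2 * Real.pi, f (A * R θ)) ν := by
    refine Continuous.integrable_of_hasCompactSupport ?_ (.of_compactSpace _)
    refine intervalIntegral.continuous_parametric_intervalIntegral_of_continuous' ?_ _ _
    exact hf.comp (continuous_fst.mul (hR.comp continuous_snd))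
  have hmean := integral_mono (hint hvalue) (hint (hderiv.pow 2)) hcircle
  rw [integral_intervalIntegral_mul_right ν hvalue hR Real.two_pi_pos.le,
    integral_intervalIntegral_mul_right ν (hderiv.pow 2) hR Real.two_pi_pos.le] at hmean
  exact le_of_mul_le_mul_left hmean (by simpa using Real.two_pi_pos)

/-- The `i`-th vector of the standard basis, as a point of the sphere. -/
def sphBasis (i : Fin d) : Sph d := ⟨EuclideanSpace.single i 1, by simp⟩

lemma inner_sphBasis_of_ne {i j : Fin d} (hij : i ≠ j) :
    ⟪(sphBasis i : E d), (sphBasis j : E d)⟫ = 0 := by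
  simp [sphBasis, EuclideanSpace.inner_single_left, hij]

lemma sum_fderiv_homogExt_smul_sphBasis_sq (V : Sph d → ℝ) (σ : Sph d)
    (A : unitary (E d →L[ℝ] E d)) :
    ∑ j, fderiv ℝ (homogExt V) (σ : E d) (A • sphBasis j : Sph d) ^ 2 = ‖sphGrad V σ‖ ^ 2 := by
  rw [← ((EuclideanSpace.basisFun (Fin d) ℝ).map
    (Unitary.linearIsometryEquiv A)).sum_sq_norm_inner_right]
  refine Finset.sum_congr rfl fun j _ => ?_
  rw [← inner_gradient_left, real_inner_comm, Real.norm_eq_abs, sq_abs,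
    OrthonormalBasis.map_apply, EuclideanSpace.basisFun_apply]
  rfl

lemma SphSmooth.sub_one_mul_integral_smul_sphBasis_sq_le (hV : SphSmooth V)
    (hodd : ∀ σ, V (-σ) = -V σ) (ν : Measure (unitary (E d →L[ℝ] E d))) [IsFiniteMeasure ν]
    [ν.IsMulRightInvariant] (i : Fin d) :
    ((d : ℝ) - 1) * ∫ A, V (A • sphBasis i) ^ 2 ∂ν ≤
      ∫ A, ‖sphGrad V (A • sphBasis i)‖ ^ 2 ∂ν := by
  have hint (j : Fin d) : Integrable (fun A : unitary (E d →L[ℝ] E d) =>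
      fderiv ℝ (homogExt V) (A • sphBasis i : Sph d) (A • sphBasis j : Sph d) ^ 2) ν :=
    ((hV.continuous_fderiv_homogExt_smul _ _).pow 2).integrable_of_hasCompactSupport
      (.of_compactSpace _)
  have hdir : ∀ j ∈ Finset.univ.erase i, _ := fun j hj =>
    hV.integral_sq_le_integral_fderiv_sq hodd ν
      (inner_sphBasis_of_ne (Finset.ne_of_mem_erase hj).symm)
  calc ((d : ℝ) - 1) * ∫ A, V (A • sphBasis i) ^ 2 ∂ν
    _ = (Finset.univ.erase i).card • ∫ A, V (A • sphBasis i) ^ 2 ∂ν := by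
      rw [Finset.card_erase_of_mem (Finset.mem_univ i), Finset.card_univ, Fintype.card_fin,
        nsmul_eq_mul, Nat.cast_sub i.pos, Nat.cast_one]
    _ ≤ ∑ j ∈ Finset.univ.erase i, ∫ A, fderiv ℝ (homogExt V) (A • sphBasis i : Sph d)
          (A • sphBasis j : Sph d) ^ 2 ∂ν := Finset.card_nsmul_le_sum _ _ _ hdir
    _ = ∑ j, ∫ A, fderiv ℝ (homogExt V) (A • sphBasis i : Sph d)
          (A • sphBasis j : Sph d) ^ 2 ∂ν :=
      Finset.sum_erase _ (by simp [fderiv_homogExt_self])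
    _ = ∫ A, ‖sphGrad V (A • sphBasis i)‖ ^ 2 ∂ν := by
      simp_rw [← integral_finsetSum _ fun j _ => hint j, sum_fderiv_homogExt_smul_sphBasis_sq]

lemma SphSmooth.sub_one_mul_integral_sq_le_of_odd (hV : SphSmooth V)
    (hodd : ∀ σ, V (-σ) = -V σ) (μ : Measure (Sph d)) [IsFiniteMeasure μ]
    [SMulInvariantMeasure (unitary (E d →L[ℝ] E d)) (Sph d) μ] :
    ((d : ℝ) - 1) * ∫ σ, V σ ^ 2 ∂μ ≤ ∫ σ, ‖sphGrad V σ‖ ^ 2 ∂μ := by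
  rcases isEmpty_or_nonempty (Fin d) with _ | ⟨⟨i⟩⟩
  · have : IsEmpty (Sph d) := ⟨fun σ => σ.ne_zero (Subsingleton.elim _ _)⟩
    simp [Measure.eq_zero_of_isEmpty μ]
  have hsq : Continuous fun σ => V σ ^ 2 := hV.continuous.pow 2
  let ν := (Measure.haar : Measure (unitary (E d →L[ℝ] E d))).inv
  have hgrad : Continuous fun σ => ‖sphGrad V σ‖ ^ 2 := by
    simpa only [real_inner_self_eq_norm_sq] using (hV.smooth_inner_sphGrad hV).continuous
  refine le_of_mul_le_mul_left ?_ (measureReal_inv_haar_univ_pos (G := unitary (E d →L[ℝ] E d)))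
  rw [mul_left_comm, measureReal_univ_mul_integral_eq_integral_smul ν μ hsq
    (sphBasis i), measureReal_univ_mul_integral_eq_integral_smul ν μ hgrad (sphBasis i),
    mul_left_comm]
  exact mul_le_mul_of_nonneg_left (hV.sub_one_mul_integral_smul_sphBasis_sq_le hodd ν i)
    measureReal_nonneg

end OddPoincare

section Bochner

variable {d : ℕ} {F G : Sph d → ℝ}

lemma sphLap_add (hF : SphSmooth F) (hG : SphSmooth G) (σ : Sph d) :
    sphLap (fun τ => F τ + G τ) σ = sphLap F σ + sphLap G σ := by
  simp_rw [sphLap_eq_sum_sphDeriv (hF.add hG), sphLap_eq_sum_sphDeriv hF,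
    sphLap_eq_sum_sphDeriv hG, funext (sphDeriv_add hF hG _),
    sphDeriv_add (hF.smooth_sphDeriv _) (hG.smooth_sphDeriv _), Finset.sum_add_distrib]

lemma sphLap_const_mul (hF : SphSmooth F) (c : ℝ) (σ : Sph d) :
    sphLap (fun τ => c * F τ) σ = c * sphLap F σ := by
  simp_rw [sphLap_eq_sum_sphDeriv (hF.const_mul c), sphLap_eq_sum_sphDeriv hF,
    funext (sphDeriv_const_mul hF c _), sphDeriv_const_mul (hF.smooth_sphDeriv _), Finset.mul_sum]

lemma sphLap_mul (hF : SphSmooth F) (hG : SphSmooth G) (σ : Sph d) :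
    sphLap (fun τ => F τ * G τ) σ =
      F σ * sphLap G σ + 2 * ⟪sphGrad F σ, sphGrad G σ⟫ + G σ * sphLap F σ := by
  simp_rw [sphLap_eq_sum_sphDeriv (hF.mul hG), sphLap_eq_sum_sphDeriv hF,
    sphLap_eq_sum_sphDeriv hG, inner_sphGrad, funext (sphDeriv_mul hF hG _), Finset.mul_sum,
    ← Finset.sum_add_distrib]
  refine Finset.sum_congr rfl fun i _ => ?_
  rw [sphDeriv_add (hF.mul (hG.smooth_sphDeriv i)) (hG.mul (hF.smooth_sphDeriv i)),
    sphDeriv_mul hF (hG.smooth_sphDeriv i), sphDeriv_mul hG (hF.smooth_sphDeriv i)]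
  ring

lemma sphLap_sphCoord (i : Fin d) (σ : Sph d) :
    sphLap (sphCoord i) σ = -((d : ℝ) - 1) * sphCoord i σ := by
  have hderiv (j : Fin d) : sphDeriv j (sphCoord i) =
      fun τ => (if j = i then 1 else 0) - sphCoord j τ * sphCoord i τ :=
    funext (sphDeriv_sphCoord j i)
  simp_rw [sphLap_eq_sum_sphDeriv (sphSmooth_sphCoord i), hderiv,
    sphDeriv_sub (sphSmooth_const _) ((sphSmooth_sphCoord _).mul (sphSmooth_sphCoord i)),
    sphDeriv_const, Finset.sum_sub_distrib, sum_sphDeriv_sphCoord_mul (sphSmooth_sphCoord i)]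
  simp only [Finset.sum_const_zero]
  ring

lemma inner_sphGrad_sphCoord (G : Sph d → ℝ) (i : Fin d) (σ : Sph d) :
    ⟪sphGrad (sphCoord i) σ, sphGrad G σ⟫ = sphDeriv i G σ := by
  simp_rw [inner_sphGrad, sphDeriv_sphCoord, sub_mul, ite_mul, one_mul, zero_mul,
    mul_right_comm _ (sphCoord i σ), Finset.sum_sub_distrib, ← Finset.sum_mul,
    sum_sphCoord_mul_sphDeriv]
  simp

lemma sphLap_sphCoord_mul (hG : SphSmooth G) (i : Fin d) (σ : Sph d) :
    sphLap (fun τ => sphCoord i τ * G τ) σ =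
      sphCoord i σ * sphLap G σ + 2 * sphDeriv i G σ - ((d : ℝ) - 1) * (sphCoord i σ * G σ) := by
  rw [sphLap_mul (sphSmooth_sphCoord i) hG, inner_sphGrad_sphCoord, sphLap_sphCoord]
  ring

lemma sum_sphCoord_mul_sphDeriv_sphDeriv (hG : SphSmooth G) (i : Fin d) (σ : Sph d) :
    ∑ j, sphCoord j σ * sphDeriv i (sphDeriv j G) σ = -sphDeriv i G σ := by
  have hterm (j : Fin d) : sphCoord j σ * sphDeriv i (sphDeriv j G) σ =
      sphCoord j σ * sphDeriv j (sphDeriv i G) σ + sphCoord i σ * (sphCoord j σ * sphDeriv j G σ)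
        - sphCoord j σ ^ 2 * sphDeriv i G σ := by
    rw [sphDeriv_comm hG j i]; ring
  simp_rw [hterm, Finset.sum_sub_distrib, Finset.sum_add_distrib, ← Finset.mul_sum,
    ← Finset.sum_mul, sum_sphCoord_mul_sphDeriv, sum_sphCoord_sq]
  ring

lemma sum_sphDeriv_sphCoord_mul_sphDeriv (hG : SphSmooth G) (i : Fin d) (σ : Sph d) :
    ∑ j, sphDeriv j (fun τ => sphCoord i τ * sphDeriv j G τ) σ =
      sphDeriv i G σ + sphCoord i σ * sphLap G σ := by
  simp_rw [sphDeriv_mul (sphSmooth_sphCoord i) (hG.smooth_sphDeriv _), Finset.sum_add_distrib,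
    ← Finset.mul_sum, ← sphLap_eq_sum_sphDeriv hG, ← inner_sphGrad_sphCoord G i, inner_sphGrad]
  rw [add_comm]
  simp_rw [mul_comm]

lemma sphLap_sphDeriv (hG : SphSmooth G) (i : Fin d) (σ : Sph d) :
    sphLap (sphDeriv i G) σ = sphDeriv i (sphLap G) σ - 2 * sphCoord i σ * sphLap G σ
      + ((d : ℝ) - 3) * sphDeriv i G σ := by
  have hD (j : Fin d) : SphSmooth (sphDeriv j G) := hG.smooth_sphDeriv j
  have hX (j : Fin d) : SphSmooth (sphCoord j) := sphSmooth_sphCoord j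
  have hlap : ∑ j, sphDeriv i (sphDeriv j (sphDeriv j G)) σ = sphDeriv i (sphLap G) σ := by
    rw [funext (sphLap_eq_sum_sphDeriv hG), sphDeriv_sum _ fun j _ => (hD j).smooth_sphDeriv j]
  have hcomm (j : Fin d) : sphDeriv j (sphDeriv i (sphDeriv j G)) σ =
      sphDeriv i (sphDeriv j (sphDeriv j G)) σ + sphCoord j σ * sphDeriv i (sphDeriv j G) σ
        - sphCoord i σ * sphDeriv j (sphDeriv j G) σ := sphDeriv_comm (hD j) i j σ
  simp_rw [sphLap_eq_sum_sphDeriv (hD i), funext (sphDeriv_comm hG i _),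
    sphDeriv_sub (((hD _).smooth_sphDeriv i).add ((hX _).mul (hD i))) ((hX i).mul (hD _)),
    sphDeriv_add ((hD _).smooth_sphDeriv i) ((hX _).mul (hD i)), hcomm]
  simp only [Finset.sum_sub_distrib, Finset.sum_add_distrib, ← Finset.mul_sum,
    sum_sphDeriv_sphCoord_mul (hD i), sum_sphDeriv_sphCoord_mul_sphDeriv hG,
    sum_sphCoord_mul_sphDeriv_sphDeriv hG, hlap, ← sphLap_eq_sum_sphDeriv hG]
  ring

lemma homogExt_neg_of_even (hF : ∀ σ, F (-σ) = F σ) (x : E d) :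
    homogExt F (-x) = homogExt F x := by
  by_cases hx : x = 0
  · simp [hx]
  · rw [homogExt_of_ne F hx, homogExt_of_ne F (neg_ne_zero.2 hx), ← hF]
    congr 1
    ext1
    simp [sphProj]

lemma sphDeriv_neg_of_even (hF : ∀ σ, F (-σ) = F σ) (i : Fin d) (σ : Sph d) :
    sphDeriv i F (-σ) = -sphDeriv i F σ := by
  have hinvariant : (fun y => homogExt F ((-1 : ℝ) • y)) = homogExt F :=
    funext fun y => by rw [neg_one_smul, homogExt_neg_of_even hF]
  have hchain := fderiv_comp_smul (𝕜 := ℝ) (f := homogExt F) (x := (σ : E d)) (-1)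
  rw [hinvariant] at hchain
  simp [sphDeriv, hchain]

/-- The restriction to the sphere of the `i`-th partial derivative of the 2-homogeneous extension
`x ↦ ‖x‖² G(x/‖x‖)`. For even `G` these are the odd functions to which the Poincaré inequality is
applied; the degree `2` is the one that makes the resulting bound for `G` sharp. -/
def sphQuadDeriv (i : Fin d) (G : Sph d → ℝ) (σ : Sph d) : ℝ :=
  sphDeriv i G σ + 2 * (sphCoord i σ * G σ)

lemma SphSmooth.smooth_sphQuadDeriv (hG : SphSmooth G) (i : Fin d) :
    SphSmooth (sphQuadDeriv i G) :=
  (hG.smooth_sphDeriv i).add (((sphSmooth_sphCoord i).mul hG).const_mul 2)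

lemma sphQuadDeriv_neg_of_even (hG : ∀ σ, G (-σ) = G σ) (i : Fin d) (σ : Sph d) :
    sphQuadDeriv i G (-σ) = -sphQuadDeriv i G σ := by
  simp only [sphQuadDeriv, sphDeriv_neg_of_even hG, hG, sphCoord, coe_neg_sphere, PiLp.neg_apply]
  ring

lemma sphLap_sphQuadDeriv (hG : SphSmooth G) (i : Fin d) (σ : Sph d) :
    sphLap (sphQuadDeriv i G) σ = ((d : ℝ) + 1) * sphDeriv i G σ + sphDeriv i (sphLap G) σ
      - 2 * ((d : ℝ) - 1) * (sphCoord i σ * G σ) := by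
  have hcoord : SphSmooth (fun τ => sphCoord i τ * G τ) := (sphSmooth_sphCoord i).mul hG
  unfold sphQuadDeriv
  rw [sphLap_add (hG.smooth_sphDeriv i) (hcoord.const_mul 2), sphLap_const_mul hcoord,
    sphLap_sphCoord_mul hG, sphLap_sphDeriv hG]
  ring

lemma sum_sphQuadDeriv_sq (G : Sph d → ℝ) (σ : Sph d) :
    ∑ i, sphQuadDeriv i G σ ^ 2 = ‖sphGrad G σ‖ ^ 2 + 4 * G σ ^ 2 := by
  have hterm (i : Fin d) : sphQuadDeriv i G σ ^ 2 = sphDeriv i G σ ^ 2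
      + 4 * G σ * (sphCoord i σ * sphDeriv i G σ) + 4 * G σ ^ 2 * sphCoord i σ ^ 2 := by
    unfold sphQuadDeriv; ring
  simp_rw [hterm, norm_sphGrad_sq, Finset.sum_add_distrib, ← Finset.mul_sum,
    sum_sphCoord_mul_sphDeriv, sum_sphCoord_sq]
  ring

lemma sum_sphQuadDeriv_mul_sphLap (hG : SphSmooth G) (σ : Sph d) :
    ∑ i, sphQuadDeriv i G σ * sphLap (sphQuadDeriv i G) σ = ((d : ℝ) + 1) * ‖sphGrad G σ‖ ^ 2
      + ⟪sphGrad (sphLap G) σ, sphGrad G σ⟫ - 4 * ((d : ℝ) - 1) * G σ ^ 2 := by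
  have hterm (i : Fin d) : sphQuadDeriv i G σ * sphLap (sphQuadDeriv i G) σ =
      ((d : ℝ) + 1) * sphDeriv i G σ ^ 2 + sphDeriv i (sphLap G) σ * sphDeriv i G σ
        + 4 * G σ * (sphCoord i σ * sphDeriv i G σ)
        + 2 * G σ * (sphCoord i σ * sphDeriv i (sphLap G) σ)
        - 4 * ((d : ℝ) - 1) * G σ ^ 2 * sphCoord i σ ^ 2 := by
    rw [sphLap_sphQuadDeriv hG]; unfold sphQuadDeriv; ring
  simp_rw [hterm, norm_sphGrad_sq, inner_sphGrad, Finset.sum_sub_distrib, Finset.sum_add_distrib,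
    ← Finset.mul_sum, sum_sphCoord_mul_sphDeriv, sum_sphCoord_sq]
  ring

lemma SphSmooth.smooth_sq (hF : SphSmooth F) : SphSmooth (fun σ => F σ ^ 2) := by
  simpa only [sq] using hF.mul hF

lemma SphSmooth.smooth_norm_sphGrad_sq (hF : SphSmooth F) :
    SphSmooth (fun σ => ‖sphGrad F σ‖ ^ 2) := by
  simpa only [real_inner_self_eq_norm_sq] using hF.smooth_inner_sphGrad hF

variable {μ : Measure (Sph d)} [IsFiniteMeasure μ]
  [SMulInvariantMeasure (unitary (E d →L[ℝ] E d)) (Sph d) μ]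

lemma SphSmooth.two_mul_dim_mul_integral_norm_sphGrad_sq_le_of_even (hG : SphSmooth G)
    (heven : ∀ σ, G (-σ) = G σ) :
    2 * (d : ℝ) * ∫ σ, ‖sphGrad G σ‖ ^ 2 ∂μ ≤ ∫ σ, sphLap G σ ^ 2 ∂μ := by
  have hV (i : Fin d) : SphSmooth (sphQuadDeriv i G) := hG.smooth_sphQuadDeriv i
  have hpoincare (i : Fin d) : ((d : ℝ) - 1) * ∫ σ, sphQuadDeriv i G σ ^ 2 ∂μ ≤
      -∫ σ, sphQuadDeriv i G σ * sphLap (sphQuadDeriv i G) σ ∂μ := by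
    simpa only [integral_mul_sphLap (hV i) (hV i), neg_neg, real_inner_self_eq_norm_sq] using
      (hV i).sub_one_mul_integral_sq_le_of_odd (sphQuadDeriv_neg_of_even heven i) μ
  have hsum := Finset.sum_le_sum fun i (_ : i ∈ Finset.univ) => hpoincare i
  have hgrad : Integrable (fun σ => ‖sphGrad G σ‖ ^ 2) μ := hG.smooth_norm_sphGrad_sq.integrable
  have hsq : Integrable (fun σ => G σ ^ 2) μ := hG.smooth_sq.integrable
  have hinner : Integrable (fun σ => ⟪sphGrad (sphLap G) σ, sphGrad G σ⟫) μ :=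
    (hG.smooth_sphLap.smooth_inner_sphGrad hG).integrable
  have hgreen : ∫ σ, ⟪sphGrad (sphLap G) σ, sphGrad G σ⟫ ∂μ = -∫ σ, sphLap G σ ^ 2 ∂μ := by
    simp_rw [sq, integral_mul_sphLap hG.smooth_sphLap hG, neg_neg]
  rw [← Finset.mul_sum, Finset.sum_neg_distrib,
    ← integral_finsetSum _ fun i _ => (hV i).smooth_sq.integrable,
    ← integral_finsetSum _ fun i _ => ((hV i).mul (hV i).smooth_sphLap).integrable] at hsum
  simp_rw [sum_sphQuadDeriv_sq, sum_sphQuadDeriv_mul_sphLap hG] at hsum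
  rw [integral_add hgrad (hsq.const_mul _),
    integral_sub (by exact (hgrad.const_mul _).add hinner) (hsq.const_mul _),
    integral_add (hgrad.const_mul _) hinner] at hsum
  simp only [integral_const_mul, hgreen] at hsum
  linarith

end Bochner

section Heat

open Filter Topology

variable {d : ℕ} {u : ℝ → ℝ → ℝ} {F G : Sph d → ℝ}

lemma IsHeatKernel.smooth_heatU (hu : IsHeatKernel d u) (hF : SphSmooth F) {t : ℝ} (ht : 0 < t) :
    SphSmooth (heatU u F t) :=
  (hu.2.2 F hF).1.comp (f := fun x : E d => (t, x)) (by fun_prop) fun _ hx => ⟨ht, hx⟩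

lemma IsHeatKernel.hasDerivAt_heatU (hu : IsHeatKernel d u) (hF : SphSmooth F) {t : ℝ}
    (ht : 0 < t) (σ : Sph d) :
    HasDerivAt (fun s => heatU u F s σ) (sphLap (heatU u F t) σ) t :=
  (hu.2.2 F hF).2.1 t ht σ

lemma IsHeatKernel.tendstoUniformly_heatU (hu : IsHeatKernel d u) (hF : SphSmooth F) :
    TendstoUniformly (heatU u F) F (𝓝[>] 0) :=
  (hu.2.2 F hF).2.2

lemma IsHeatKernel.continuousOn_heatU (hu : IsHeatKernel d u) (hF : SphSmooth F) :
    ContinuousOn (fun p : ℝ × Sph d => heatU u F p.1 p.2) (Set.Ioi 0 ×ˢ Set.univ) := by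
  have h := (hu.2.2 F hF).1.continuousOn.comp (f := fun p : ℝ × Sph d => (p.1, (p.2 : E d)))
    (s := Set.Ioi 0 ×ˢ Set.univ) (by fun_prop) fun p hp => ⟨hp.1, p.2.ne_zero⟩
  simpa only [Function.comp_def, homogExt_coe] using h

/- `ΔU` is the time derivative of the jointly smooth function `U`. -/
lemma IsHeatKernel.continuousOn_sphLap_heatU (hu : IsHeatKernel d u) (hF : SphSmooth F) :
    ContinuousOn (fun p : ℝ × Sph d => sphLap (heatU u F p.1) p.2) (Set.Ioi 0 ×ˢ Set.univ) := by
  set Φ : ℝ × E d → ℝ := fun p => homogExt (heatU u F p.1) p.2 with hΦ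
  set Ω : Set (ℝ × E d) := Set.Ioi 0 ×ˢ {x | x ≠ 0}
  have hΩ_open : IsOpen Ω := isOpen_Ioi.prod isOpen_ne
  have hΦ_smooth : ContDiffOn ℝ (⊤ : ℕ∞) Φ Ω := (hu.2.2 F hF).1
  have hmem {p : ℝ × Sph d} (hp : p ∈ Set.Ioi (0 : ℝ) ×ˢ (Set.univ : Set (Sph d))) :
      (p.1, (p.2 : E d)) ∈ Ω := ⟨hp.1, p.2.ne_zero⟩
  have hcont : ContinuousOn
      (fun p : ℝ × Sph d => fderiv ℝ Φ (p.1, (p.2 : E d)) ((1 : ℝ), (0 : E d)))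
      (Set.Ioi 0 ×ˢ Set.univ) :=
    ((hΦ_smooth.continuousOn_fderiv_of_isOpen hΩ_open (by simp)).comp
      (f := fun p : ℝ × Sph d => (p.1, (p.2 : E d))) (by fun_prop) fun _ => hmem).clm_apply
      continuousOn_const
  refine hcont.congr fun p hp => ?_
  have hcurve : HasDerivAt (fun r : ℝ => (r, (p.2 : E d))) ((1 : ℝ), (0 : E d)) p.1 :=
    (hasDerivAt_id p.1).prodMk (hasDerivAt_const _ _)
  have hchain := ((hΦ_smooth.contDiffAt (hΩ_open.mem_nhds (hmem hp))).differentiableAt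
    (by simp)).hasFDerivAt.comp_hasDerivAt p.1 hcurve
  simp only [hΦ, Function.comp_def, homogExt_coe] at hchain
  exact (hu.hasDerivAt_heatU hF hp.1 p.2).unique hchain

lemma heatU_smul (A : unitary (E d →L[ℝ] E d)) (t : ℝ) (σ : Sph d) :
    heatU u F t (A • σ) = heatU u (fun τ => F (A • τ)) t σ := by
  have hinner (τ : Sph d) : ⟪((A • τ : Sph d) : E d), ((A • σ : Sph d) : E d)⟫ =
      ⟪(τ : E d), (σ : E d)⟫ := (Unitary.linearIsometryEquiv A).inner_map_map _ _
  rw [heatU, ← integral_smul_eq_self _ (g := A)]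
  simp_rw [hinner]
  rfl

lemma heatU_neg (heven : ∀ σ, F (-σ) = F σ) (t : ℝ) (σ : Sph d) :
    heatU u F t (-σ) = heatU u F t σ := by
  have hneg (τ : Sph d) : (-1 : unitary (E d →L[ℝ] E d)) • τ = -τ := rfl
  rw [← hneg, heatU_smul]
  simp_rw [hneg, heven]

lemma IsHeatKernel.heatU_one (hu : IsHeatKernel d u) {t : ℝ} (ht : 0 < t) (σ : Sph d) :
    heatU u (fun _ => 1) t σ = 1 := by
  have hconst (s : ℝ) : heatU u (fun _ : Sph d => 1) s = fun _ => heatU u (fun _ => 1) s σ := by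
    funext τ
    obtain ⟨A, rfl⟩ := MulAction.exists_smul_eq (unitary (E d →L[ℝ] E d)) σ τ
    exact heatU_smul A s σ
  have hlap (s : ℝ) : sphLap (heatU u (fun _ : Sph d => 1) s) σ = 0 := by
    rw [hconst s, sphLap_const]
  refine eq_of_tendsto_of_hasDerivAt_zero (T := t + 1) (fun s hs => ?_)
    ((hu.tendstoUniformly_heatU (sphSmooth_const 1)).tendsto_at σ) ⟨ht, lt_add_one t⟩
  exact (hu.hasDerivAt_heatU (sphSmooth_const 1) hs.1 σ).congr_deriv (hlap s)

lemma IsHeatKernel.tendsto_integral_mul_heatU_of_continuousOn (hu : IsHeatKernel d u)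
    (hF : SphSmooth F) {g : ℝ → Sph d → ℝ} {ε : ℝ} (hε : 0 < ε)
    (hg : ContinuousOn (fun p : ℝ × Sph d => g p.1 p.2) (Set.Icc 0 ε ×ˢ Set.univ)) :
    Tendsto (fun t => ∫ σ, g t σ * heatU u F t σ ∂sphMeasure d) (𝓝[>] 0)
      (𝓝 (∫ σ, g 0 σ * F σ ∂sphMeasure d)) := by
  obtain ⟨M, hM⟩ := isCompact_univ.exists_bound_of_continuousOn hF.continuous.continuousOn
  obtain ⟨C, hC⟩ := (isCompact_Icc.prod isCompact_univ).exists_bound_of_continuousOn hg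
  have hsmall : ∀ᶠ t in 𝓝[>] (0 : ℝ), t ∈ Set.Ioc 0 ε := Ioc_mem_nhdsGT hε
  have hg_cont {t : ℝ} (ht : t ∈ Set.Icc 0 ε) : Continuous (g t) :=
    hg.comp_continuous (f := fun σ => (t, σ)) (by fun_prop) fun σ => ⟨ht, trivial⟩
  have hg_lim (σ : Sph d) : Tendsto (fun t => g t σ) (𝓝[>] 0) (𝓝 (g 0 σ)) := by
    have hpath : ContinuousOn (fun t => g t σ) (Set.Icc 0 ε) :=
      hg.comp (f := fun t => (t, σ)) (by fun_prop) fun t ht => ⟨ht, trivial⟩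
    exact (hpath 0 ⟨le_rfl, hε.le⟩).mono_left
      (nhdsWithin_le_of_mem (mem_of_superset hsmall Set.Ioc_subset_Icc_self))
  refine tendsto_integral_filter_of_dominated_convergence (fun _ => C * (M + 1)) ?_ ?_
    (integrable_const _)
    (.of_forall fun σ => (hg_lim σ).mul ((hu.tendstoUniformly_heatU hF).tendsto_at σ))
  · filter_upwards [hsmall] with t ht
    exact ((hg_cont (Set.Ioc_subset_Icc_self ht)).mul
      (hu.smooth_heatU hF ht.1).continuous).aestronglyMeasurable
  · filter_upwards [hsmall, Metric.tendstoUniformly_iff.1 (hu.tendstoUniformly_heatU hF) 1 one_pos]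
      with t ht hdist
    refine .of_forall fun σ => ?_
    have hgt : ‖g t σ‖ ≤ C := hC (t, σ) ⟨Set.Ioc_subset_Icc_self ht, trivial⟩
    have hUt : ‖heatU u F t σ‖ ≤ M + 1 :=
      (norm_le_of_mem_closedBall (dist_comm (F σ) _ ▸ (hdist σ).le)).trans (by grind [hM σ trivial])
    rw [norm_mul]
    exact mul_le_mul hgt hUt (norm_nonneg _) ((norm_nonneg _).trans hgt)

lemma IsHeatKernel.tendsto_integral_mul_heatU (hu : IsHeatKernel d u) (hF : SphSmooth F)
    {g : Sph d → ℝ} (hg : Continuous g) :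
    Tendsto (fun t => ∫ σ, g σ * heatU u F t σ ∂sphMeasure d) (𝓝[>] 0)
      (𝓝 (∫ σ, g σ * F σ ∂sphMeasure d)) :=
  hu.tendsto_integral_mul_heatU_of_continuousOn hF one_pos (g := fun _ => g)
    (hg.comp continuous_snd).continuousOn

lemma IsHeatKernel.hasDerivAt_integral_mul_heatU (hu : IsHeatKernel d u) (hF : SphSmooth F)
    {g : Sph d → ℝ} (hg : Continuous g) {t : ℝ} (ht : 0 < t) :
    HasDerivAt (fun s => ∫ σ, g σ * heatU u F s σ ∂sphMeasure d)
      (∫ σ, g σ * sphLap (heatU u F t) σ ∂sphMeasure d) t :=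
  hasDerivAt_integral_of_continuousOn_prod isOpen_Ioi
    (fun _ hs => hg.mul (hu.smooth_heatU hF hs).continuous)
    (fun _ hs σ => (hu.hasDerivAt_heatU hF hs σ).const_mul (g σ))
    ((hg.comp continuous_snd).continuousOn.mul (hu.continuousOn_sphLap_heatU hF)) ht

/- The two terms of the product rule cancel because `Δ` is symmetric. -/
lemma IsHeatKernel.hasDerivAt_integral_heatU_sub_mul_heatU (hu : IsHeatKernel d u)
    (hF : SphSmooth F) (hG : SphSmooth G) {T r : ℝ} (hr : r ∈ Set.Ioo 0 T) :
    HasDerivAt (fun r => ∫ σ, heatU u F (T - r) σ * heatU u G r σ ∂sphMeasure d) 0 r := by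
  have hpos {q : ℝ} (hq : q ∈ Set.Ioo 0 T) : 0 < T - q := sub_pos.2 hq.2
  have hreflect : Set.MapsTo (fun p : ℝ × Sph d => (T - p.1, p.2)) (Set.Ioo 0 T ×ˢ Set.univ)
      (Set.Ioi 0 ×ˢ Set.univ) := fun p hp => ⟨hpos hp.1, trivial⟩
  have hsub : Set.Ioo 0 T ×ˢ (Set.univ : Set (Sph d)) ⊆ Set.Ioi 0 ×ˢ Set.univ :=
    Set.prod_mono Set.Ioo_subset_Ioi_self subset_rfl
  have hF_r := hu.smooth_heatU hF (hpos hr)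
  have hG_r := hu.smooth_heatU hG hr.1
  refine (hasDerivAt_integral_of_continuousOn_prod (I := Set.Ioo 0 T)
    (ψ := fun q σ => -sphLap (heatU u F (T - q)) σ * heatU u G q σ
      + heatU u F (T - q) σ * sphLap (heatU u G q) σ) isOpen_Ioo
    (fun q hq => (hu.smooth_heatU hF (hpos hq)).continuous.mul
      (hu.smooth_heatU hG hq.1).continuous)
    (fun q hq σ => ((hu.hasDerivAt_heatU hF (hpos hq) σ).comp_const_sub T q).mul
      (hu.hasDerivAt_heatU hG hq.1 σ)) ?_ hr).congr_deriv ?_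
  · exact (((hu.continuousOn_sphLap_heatU hF).comp (by fun_prop) hreflect).neg.mul
      ((hu.continuousOn_heatU hG).mono hsub)).add
      (((hu.continuousOn_heatU hF).comp (by fun_prop) hreflect).mul
        ((hu.continuousOn_sphLap_heatU hG).mono hsub))
  · simp_rw [neg_mul]
    rw [integral_add (by exact (hF_r.smooth_sphLap.mul hG_r).integrable.neg)
      (hF_r.mul hG_r.smooth_sphLap).integrable, integral_neg, integral_mul_sphLap_comm hF_r hG_r,
      neg_add_cancel]

lemma IsHeatKernel.integral_mul_heatU_add (hu : IsHeatKernel d u) (hF : SphSmooth F)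
    (hG : SphSmooth G) {s t : ℝ} (hs : 0 < s) (ht : 0 < t) :
    ∫ σ, G σ * heatU u F (s + t) σ ∂sphMeasure d =
      ∫ σ, heatU u F s σ * heatU u G t σ ∂sphMeasure d := by
  have hlim := hu.tendsto_integral_mul_heatU_of_continuousOn hG ht
    (g := fun r => heatU u F (s + t - r))
    ((hu.continuousOn_heatU hF).comp (f := fun p : ℝ × Sph d => (s + t - p.1, p.2)) (by fun_prop)
      fun p hp => ⟨by grind [hp.1.2], trivial⟩)
  have hconst := eq_of_tendsto_of_hasDerivAt_zero
    (fun r hr => hu.hasDerivAt_integral_heatU_sub_mul_heatU hF hG hr) hlim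
    (t := t) ⟨ht, lt_add_of_pos_left t hs⟩
  simp_rw [add_sub_cancel_right, sub_zero] at hconst
  simp_rw [hconst, mul_comm]

lemma IsHeatKernel.integral_mul_sphLap_heatU_add (hu : IsHeatKernel d u) (hF : SphSmooth F)
    (hG : SphSmooth G) {s t : ℝ} (hs : 0 < s) (ht : 0 < t) :
    ∫ σ, G σ * sphLap (heatU u F (s + t)) σ ∂sphMeasure d =
      ∫ σ, sphLap (heatU u F s) σ * heatU u G t σ ∂sphMeasure d := by
  rw [← integral_mul_sphLap_comm (hu.smooth_heatU hF hs) (hu.smooth_heatU hG ht)]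
  have hleft := (hu.hasDerivAt_integral_mul_heatU hF hG.continuous
    (add_pos hs ht)).comp_const_add s t
  have hright := hu.hasDerivAt_integral_mul_heatU hG (hu.smooth_heatU hF hs).continuous ht
  refine hleft.unique (hright.congr_of_eventuallyEq ?_)
  filter_upwards [Ioi_mem_nhds ht] with r hr using hu.integral_mul_heatU_add hF hG hs hr

lemma IsHeatKernel.hasDerivAt_integral_mul_sphLap_heatU (hu : IsHeatKernel d u)
    (hF : SphSmooth F) {t : ℝ} (ht : 0 < t) :
    HasDerivAt (fun s => ∫ σ, F σ * sphLap (heatU u F s) σ ∂sphMeasure d)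
      (∫ σ, sphLap (heatU u F (t / 2)) σ ^ 2 ∂sphMeasure d) t := by
  have hhalf := half_pos ht
  have hderiv := hu.hasDerivAt_integral_mul_heatU hF
    (hu.smooth_heatU hF hhalf).smooth_sphLap.continuous hhalf
  have hshift : HasDerivAt (fun r => ∫ σ, F σ * sphLap (heatU u F (t / 2 + r)) σ ∂sphMeasure d)
      (∫ σ, sphLap (heatU u F (t / 2)) σ ^ 2 ∂sphMeasure d) (t - t / 2) := by
    simp_rw [sub_half, sq]
    refine hderiv.congr_of_eventuallyEq ?_
    filter_upwards [Ioi_mem_nhds hhalf] with r hr using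
      hu.integral_mul_sphLap_heatU_add hF hF hhalf hr
  simpa only [add_sub_cancel] using hshift.comp_sub_const t (t / 2)

lemma IsHeatKernel.integral_mul_sphLap_heatU (hu : IsHeatKernel d u) (hF : SphSmooth F) {t : ℝ}
    (ht : 0 < t) :
    ∫ σ, F σ * sphLap (heatU u F t) σ ∂sphMeasure d =
      -∫ σ, ‖sphGrad (heatU u F (t / 2)) σ‖ ^ 2 ∂sphMeasure d := by
  have hsmooth := hu.smooth_heatU hF (half_pos ht)
  have h := hu.integral_mul_sphLap_heatU_add hF hF (half_pos ht) (half_pos ht)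
  rw [add_halves, ← integral_mul_sphLap_comm hsmooth hsmooth,
    integral_mul_sphLap hsmooth hsmooth] at h
  simpa only [real_inner_self_eq_norm_sq] using h

lemma IsHeatKernel.tendsto_integral_mul_sphLap_heatU (hu : IsHeatKernel d u) (hF : SphSmooth F) :
    Tendsto (fun t => ∫ σ, F σ * sphLap (heatU u F t) σ ∂sphMeasure d) (𝓝[>] 0)
      (𝓝 (-∫ σ, ‖sphGrad F σ‖ ^ 2 ∂sphMeasure d)) := by
  have hlim := hu.tendsto_integral_mul_heatU hF hF.smooth_sphLap.continuous
  rw [← integral_mul_sphLap_comm hF hF, integral_mul_sphLap hF hF] at hlim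
  simp_rw [real_inner_self_eq_norm_sq] at hlim
  refine hlim.congr' ?_
  filter_upwards [self_mem_nhdsWithin] with t ht
  exact (integral_mul_sphLap_comm hF (hu.smooth_heatU hF ht)).symm

lemma IsHeatKernel.integral_sq_sub_le_integral_mul_heatU_of_even (hu : IsHeatKernel d u)
    (hd : d ≠ 0) (hF : SphSmooth F) (heven : ∀ σ, F (-σ) = F σ) {t : ℝ} (ht : 0 < t) :
    ∫ σ, F σ ^ 2 ∂sphMeasure d - (∫ σ, ‖sphGrad F σ‖ ^ 2 ∂sphMeasure d) *
      ((1 - Real.exp (-(2 * d) * t)) / (2 * d)) ≤ ∫ σ, F σ * heatU u F t σ ∂sphMeasure d := by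
  have hcurv (s : ℝ) (hs : 0 < s) : 0 ≤ ∫ σ, sphLap (heatU u F (s / 2)) σ ^ 2 ∂sphMeasure d +
      2 * d * ∫ σ, F σ * sphLap (heatU u F s) σ ∂sphMeasure d := by
    have hbochner := (hu.smooth_heatU hF (half_pos hs))
      |>.two_mul_dim_mul_integral_norm_sphGrad_sq_le_of_even (μ := sphMeasure d)
        (heatU_neg heven (s / 2))
    rw [hu.integral_mul_sphLap_heatU hF hs]
    linarith
  have h := add_mul_le_of_tendsto_of_deriv (by positivity)
    (fun s hs => hu.hasDerivAt_integral_mul_heatU hF hF.continuous hs)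
    (fun s hs => hu.hasDerivAt_integral_mul_sphLap_heatU hF hs) hcurv
    (hu.tendsto_integral_mul_heatU hF hF.continuous) (hu.tendsto_integral_mul_sphLap_heatU hF) ht
  simpa only [sq, neg_mul, ← sub_eq_add_neg] using h

lemma IsHeatKernel.integral_heatU (hu : IsHeatKernel d u) (hF : SphSmooth F) {t : ℝ} (ht : 0 < t) :
    ∫ σ, heatU u F t σ ∂sphMeasure d = ∫ σ, F σ ∂sphMeasure d := by
  have h := eq_of_tendsto_of_hasDerivAt_zero (T := t + 1) (fun s hs =>
    (hu.hasDerivAt_integral_mul_heatU hF (continuous_const (y := 1)) hs.1).congr_deriv <| by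
      rw [integral_mul_sphLap_comm (sphSmooth_const 1) (hu.smooth_heatU hF hs.1)]
      simp [sphLap_const]) (hu.tendsto_integral_mul_heatU hF continuous_const) ⟨ht, lt_add_one t⟩
  simpa only [one_mul] using h

end Heat

section Subordination

variable {d : ℕ} {u : ℝ → ℝ → ℝ} {F : Sph d → ℝ}

lemma inner_mem_Icc_of_mem_unitSphere {H : Type*} [NormedAddCommGroup H] [InnerProductSpace ℝ H]
    (σ τ : Metric.sphere (0 : H) 1) : ⟪(σ : H), (τ : H)⟫ ∈ Set.Icc (-1 : ℝ) 1 := by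
  have h := abs_real_inner_le_norm (σ : H) (τ : H)
  simp only [norm_eq_of_mem_sphere, mul_one] at h
  exact abs_le.1 h

/- Integrability of the kernel is not part of `IsHeatKernel`; it holds because its integral is `1`,
not the junk value `0`. -/
lemma IsHeatKernel.integrable_mul (hu : IsHeatKernel d u) {t : ℝ} (ht : 0 < t) {g : Sph d → ℝ}
    (hg : Continuous g) (σ : Sph d) :
    Integrable (fun τ : Sph d => g τ * u t ⟪(τ : E d), (σ : E d)⟫) (sphMeasure d) := by
  obtain ⟨C, hC⟩ := isCompact_univ.exists_bound_of_continuousOn hg.continuousOn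
  have hkernel : Integrable (fun τ : Sph d => u t ⟪(τ : E d), (σ : E d)⟫) (sphMeasure d) := by
    refine .of_integral_ne_zero ?_
    simpa only [heatU, one_mul] using (hu.heatU_one ht σ).trans_ne one_ne_zero
  exact hkernel.bdd_mul hg.aestronglyMeasurable (.of_forall fun τ => hC τ trivial)

lemma IsHeatKernel.integral_sq_sub_mul (hu : IsHeatKernel d u) {t : ℝ} (ht : 0 < t)
    (hF : Continuous F) (σ : Sph d) :
    ∫ τ : Sph d, (F τ - F σ) ^ 2 * u t ⟪(τ : E d), (σ : E d)⟫ ∂sphMeasure d =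
      heatU u (fun τ => F τ ^ 2) t σ - 2 * (F σ * heatU u F t σ) + F σ ^ 2 := by
  have hsq := hu.integrable_mul ht (hF.pow 2) σ
  have hcross := (hu.integrable_mul ht hF σ).const_mul (2 * F σ)
  have hone := (hu.integrable_mul ht (continuous_const (y := (1 : ℝ))) σ).const_mul (F σ ^ 2)
  have hexpand (τ : Sph d) : (F τ - F σ) ^ 2 * u t ⟪(τ : E d), (σ : E d)⟫ =
      F τ ^ 2 * u t ⟪(τ : E d), (σ : E d)⟫ - 2 * F σ * (F τ * u t ⟪(τ : E d), (σ : E d)⟫) +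
        F σ ^ 2 * (1 * u t ⟪(τ : E d), (σ : E d)⟫) := by ring
  have hmass : ∫ τ : Sph d, 1 * u t ⟪(τ : E d), (σ : E d)⟫ ∂sphMeasure d = 1 := hu.heatU_one ht σ
  simp_rw [hexpand]
  rw [integral_add (by exact hsq.sub hcross) hone, integral_sub (by exact hsq) hcross,
    integral_const_mul, integral_const_mul, hmass, mul_one, mul_assoc]
  rfl

lemma IsHeatKernel.integral_integral_sq_sub_mul (hu : IsHeatKernel d u) {t : ℝ} (ht : 0 < t)
    (hF : SphSmooth F) :
    ∫ σ : Sph d, ∫ τ : Sph d, (F τ - F σ) ^ 2 * u t ⟪(τ : E d), (σ : E d)⟫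
        ∂sphMeasure d ∂sphMeasure d =
      2 * (∫ σ, F σ ^ 2 ∂sphMeasure d - ∫ σ, F σ * heatU u F t σ ∂sphMeasure d) := by
  have hsq := (hu.smooth_heatU hF.smooth_sq ht).integrable (μ := sphMeasure d)
  have hcross := (hF.mul (hu.smooth_heatU hF ht)).integrable (μ := sphMeasure d)
  simp_rw [hu.integral_sq_sub_mul ht hF.continuous]
  rw [integral_add (by exact hsq.sub (hcross.const_mul 2)) hF.smooth_sq.integrable,
    integral_sub hsq (hcross.const_mul 2), integral_const_mul, hu.integral_heatU hF.smooth_sq ht]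
  ring

lemma IsHeatKernel.lintegral_lintegral_sq_sub_mul (hu : IsHeatKernel d u) {t : ℝ} (ht : 0 < t)
    (hF : SphSmooth F) :
    ∫⁻ σ : Sph d, ∫⁻ τ : Sph d, ENNReal.ofReal ((F τ - F σ) ^ 2 * u t ⟪(τ : E d), (σ : E d)⟫)
        ∂sphMeasure d ∂sphMeasure d =
      ENNReal.ofReal (∫ σ : Sph d, ∫ τ : Sph d, (F τ - F σ) ^ 2 * u t ⟪(τ : E d), (σ : E d)⟫
        ∂sphMeasure d ∂sphMeasure d) := by
  have hnonneg (σ τ : Sph d) : 0 ≤ (F τ - F σ) ^ 2 * u t ⟪(τ : E d), (σ : E d)⟫ :=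
    mul_nonneg (sq_nonneg _) (hu.1 t ht _ (inner_mem_Icc_of_mem_unitSphere τ σ))
  have hinner (σ : Sph d) : Integrable
      (fun τ : Sph d => (F τ - F σ) ^ 2 * u t ⟪(τ : E d), (σ : E d)⟫) (sphMeasure d) :=
    hu.integrable_mul ht ((hF.continuous.sub continuous_const).pow 2) σ
  have houter : Integrable (fun σ : Sph d => ∫ τ : Sph d,
      (F τ - F σ) ^ 2 * u t ⟪(τ : E d), (σ : E d)⟫ ∂sphMeasure d) (sphMeasure d) := by
    simp_rw [hu.integral_sq_sub_mul ht hF.continuous]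
    exact (((hu.smooth_heatU hF.smooth_sq ht).sub
      ((hF.mul (hu.smooth_heatU hF ht)).const_mul 2)).add hF.smooth_sq).integrable
  rw [ofReal_integral_eq_lintegral_ofReal houter
    (.of_forall fun σ => integral_nonneg (hnonneg σ))]
  exact lintegral_congr fun σ =>
    (ofReal_integral_eq_lintegral_ofReal (hinner σ) (.of_forall (hnonneg σ))).symm

lemma IsHeatKernel.lintegral_lintegral_sq_sub_mul_le_of_even (hu : IsHeatKernel d u) (hd : d ≠ 0)
    (hF : SphSmooth F) (heven : ∀ σ, F (-σ) = F σ) {t : ℝ} (ht : 0 < t) :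
    ∫⁻ σ : Sph d, ∫⁻ τ : Sph d, ENNReal.ofReal ((F τ - F σ) ^ 2 * u t ⟪(τ : E d), (σ : E d)⟫)
        ∂sphMeasure d ∂sphMeasure d ≤
      ENNReal.ofReal ((1 - Real.exp (-(2 * (d : ℝ) * t))) / d *
        ∫ σ, ‖sphGrad F σ‖ ^ 2 ∂sphMeasure d) := by
  rw [hu.lintegral_lintegral_sq_sub_mul ht hF, hu.integral_integral_sq_sub_mul ht hF]
  refine ENNReal.ofReal_le_ofReal ?_
  have hdecay := hu.integral_sq_sub_le_integral_mul_heatU_of_even hd hF heven ht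
  have hhalf : (1 - Real.exp (-(2 * (d : ℝ) * t))) / d =
      2 * ((1 - Real.exp (-(2 * d) * t)) / (2 * d)) := by
    rw [neg_mul]
    field_simp
  rw [hhalf]
  linarith

lemma ofReal_integral_integral_sq_sub_mul_subordKernel_le
    (hu : Measurable fun p : ℝ × ℝ => u p.1 p.2) {ω : ℝ → ℝ} (hω : Measurable ω)
    (hω0 : ∀ t, 0 < t → 0 ≤ ω t) (hF : Measurable F) :
    ENNReal.ofReal (∫ σ : Sph d, ∫ τ : Sph d,
        (F τ - F σ) ^ 2 * subordKernel u ω ⟪(τ : E d), (σ : E d)⟫ ∂sphMeasure d ∂sphMeasure d) ≤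
      ∫⁻ t in Set.Ioi (0 : ℝ), ENNReal.ofReal (ω t) * ∫⁻ σ : Sph d, ∫⁻ τ : Sph d,
        ENNReal.ofReal ((F τ - F σ) ^ 2 * u t ⟪(τ : E d), (σ : E d)⟫)
          ∂sphMeasure d ∂sphMeasure d := by
  have hinner : Measurable fun p : (Sph d × Sph d) × ℝ => ⟪(p.1.2 : E d), (p.1.1 : E d)⟫ :=
    Continuous.measurable (by fun_prop)
  have hkernel : Measurable fun p : (Sph d × Sph d) × ℝ =>
      (F p.1.2 - F p.1.1) ^ 2 * (u p.2 ⟪(p.1.2 : E d), (p.1.1 : E d)⟫ * ω p.2) :=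
    (((hF.comp (measurable_snd.comp measurable_fst)).sub
      (hF.comp (measurable_fst.comp measurable_fst))).pow_const 2).mul
      ((hu.comp (measurable_snd.prodMk hinner)).mul (hω.comp measurable_snd))
  simp_rw [subordKernel, ← integral_const_mul]
  refine (ofReal_integral_integral_integral_le hkernel).trans_eq ?_
  refine setLIntegral_congr_fun measurableSet_Ioi fun t ht => ?_
  simp_rw [← lintegral_const_mul' _ _ ENNReal.ofReal_ne_top, ← ENNReal.ofReal_mul (hω0 t ht),
    mul_left_comm (ω t), mul_comm (ω t)]

end Subordination

/-- A Hardy-type inequality for subordinate kernels, with constant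
`C_P = ∫₀^∞ ω(t)(1 - e^{-2dt})/d dt`. -/
theorem hardy_subordinate
    (d : ℕ) (hd : 2 ≤ d) (u : ℝ → ℝ → ℝ) (hu : IsHeatKernel d u)
    (ω : ℝ → ℝ) (hω : Measurable ω) (hω0 : ∀ t, 0 < t → 0 ≤ ω t)
    (hint : IntegrableOn (fun t => ω t * (1 - Real.exp (-(2 * (d : ℝ) * t)))) (Set.Ioi 0))
    (F : Sph d → ℝ) (hF : SphSmooth F) (hFeven : ∀ σ, F (-σ) = F σ) :
    ∫ (σ : Sph d), (∫ (σ' : Sph d),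
          (F σ' - F σ) ^ 2 * subordKernel u ω ⟪(σ' : E d), (σ : E d)⟫ ∂(sphMeasure d))
        ∂(sphMeasure d)
      ≤ (∫ t in Set.Ioi (0 : ℝ), ω t * (1 - Real.exp (-(2 * (d : ℝ) * t))) / d) *
          ∫ (σ : Sph d), ‖sphGrad F σ‖ ^ 2 ∂(sphMeasure d) := by
  set D := ∫ σ, ‖sphGrad F σ‖ ^ 2 ∂sphMeasure d
  have hweight (t : ℝ) (ht : 0 < t) : 0 ≤ ω t * (1 - Real.exp (-(2 * (d : ℝ) * t))) / d :=
    div_nonneg (mul_nonneg (hω0 t ht) (sub_nonneg.2 (Real.exp_le_one_iff.2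
      (neg_nonpos.2 (by positivity))))) d.cast_nonneg
  have hD : 0 ≤ D := integral_nonneg fun σ => sq_nonneg _
  rw [← integral_mul_const, ← ENNReal.ofReal_le_ofReal_iff
      (setIntegral_nonneg measurableSet_Ioi fun t ht => mul_nonneg (hweight t ht) hD),
    ofReal_integral_eq_lintegral_ofReal ((hint.div_const _).mul_const D)
      (ae_restrict_of_forall_mem measurableSet_Ioi fun t ht => mul_nonneg (hweight t ht) hD)]
  refine (ofReal_integral_integral_sq_sub_mul_subordKernel_le hu.2.1 hω hω0
    hF.continuous.measurable).trans (setLIntegral_mono' measurableSet_Ioi fun t ht => ?_)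
  calc _ ≤ ENNReal.ofReal (ω t) *
        ENNReal.ofReal ((1 - Real.exp (-(2 * (d : ℝ) * t))) / d * D) :=
      mul_le_mul_right (hu.lintegral_lintegral_sq_sub_mul_le_of_even (by lia) hF hFeven ht) _
    _ = _ := by rw [← ENNReal.ofReal_mul (hω0 t ht), mul_div_assoc, ← mul_assoc (ω t)]
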